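/- Assume the Riemann hypothesis: every complex zero s of ζ with 0 < Re(s) < 1 satisfies Re(s) = 1/2. Then there exists a constant C > 0 such that for all real x ≥ 2, |π(x) − ∫_2^x dt/log t| ≤ C · √x · log x. -/

import Mathlib

/-- The prime counting function: the number of primes `≤ x`. -/
noncomputable def primePi (x : ℝ) : ℕ := Nat.primeCounting ⌊x⌋₊

section VonKochAux

open Complex Filter Topology Set

noncomputable def fz : ℂ → ℂ := Function.update (fun s => (s - 1) * riemannZeta s) 1 1

lemma fz_eq {s : ℂ} (h : s ≠ 1) : fz s = (s - 1) * riemannZeta s := by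
  simp [fz, h]

lemma fz_one : fz 1 = 1 := by simp [fz]

lemma fz_eventuallyEq {s : ℂ} (h : s ≠ 1) : fz =ᶠ[𝓝 s] fun s => (s - 1) * riemannZeta s := by
  filter_upwards [isOpen_ne.mem_nhds h] with z hz using fz_eq hz

lemma fz_differentiable : Differentiable ℂ fz := by
  have h1 : ∀ s : ℂ, s ≠ 1 → DifferentiableAt ℂ fz s := fun s hs => by
    refine DifferentiableAt.congr_of_eventuallyEq ?_ (fz_eventuallyEq hs)
    exact (differentiableAt_id.sub_const 1).mul (differentiableAt_riemannZeta hs)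
  intro s
  by_cases hs : s = 1
  · subst hs
    refine (Complex.analyticAt_of_differentiable_on_punctured_nhds_of_continuousAt ?_ ?_).differentiableAt
    · filter_upwards [self_mem_nhdsWithin] with z hz using h1 z hz
    · rw [fz, continuousAt_update_same]
      exact riemannZeta_residue_one
  · exact h1 s hs

lemma fz_ne_zero (RH : ∀ s : ℂ, riemannZeta s = 0 → 0 < s.re → s.re < 1 → s.re = 1 / 2)
    {s : ℂ} (hs : 1/2 < s.re) : fz s ≠ 0 := by
  by_cases h : s = 1
  · subst h; simp [fz_one]
  rw [fz_eq h]
  refine mul_ne_zero (sub_ne_zero.mpr h) fun h0 => ?_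
  by_cases h1 : 1 ≤ s.re
  · exact riemannZeta_ne_zero_of_one_le_re h1 h0
  · have := RH s h0 (by linarith) (by linarith)
    linarith

lemma fz_zero_re (RH : ∀ s : ℂ, riemannZeta s = 0 → 0 < s.re → s.re < 1 → s.re = 1 / 2)
    {s : ℂ} (hs : 0 < s.re) (hs1 : s.re < 1) (h0 : fz s = 0) : s.re = 1/2 := by
  have h : s ≠ 1 := by rintro rfl; simp at hs1
  rw [fz_eq h] at h0
  rcases mul_eq_zero.mp h0 with h0 | h0
  · exact absurd h0 (sub_ne_zero.mpr h)
  · exact RH s h0 hs hs1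

lemma norm_LSeries_le {f : ℕ → ℂ} {a : ℝ} (hf : LSeriesSummable f a) {s : ℂ} (hs : a ≤ s.re) :
    ‖LSeries f s‖ ≤ ∑' n, ‖LSeries.term f a n‖ := by
  have h1 : ∀ n, ‖LSeries.term f s n‖ ≤ ‖LSeries.term f a n‖ := fun n =>
    LSeries.norm_term_le_of_re_le_re f (by simpa using hs) n
  exact tsum_of_norm_bounded (hf.norm.hasSum) h1

lemma fz_logDeriv {s : ℂ} (hs : 1 < s.re) : deriv fz s / fz s =
    1 / (s - 1) - LSeries (fun n => (ArithmeticFunction.vonMangoldt n : ℂ)) s := by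
  have h : s ≠ 1 := by rintro rfl; simp at hs
  have h2 := riemannZeta_ne_zero_of_one_le_re hs.le
  have h3 : s - 1 ≠ 0 := sub_ne_zero.mpr h
  rw [(fz_eventuallyEq h).deriv_eq, fz_eq h,
    ArithmeticFunction.LSeries_vonMangoldt_eq_deriv_riemannZeta_div hs]
  have : HasDerivAt (fun s => (s - 1) * riemannZeta s) (1 * riemannZeta s + (s - 1) * deriv riemannZeta s) s :=
    ((hasDerivAt_id s).sub_const 1).mul (differentiableAt_riemannZeta h).hasDerivAt
  rw [this.deriv]
  field_simp
  ring

lemma fz_logDeriv_bound : ∃ C : ℝ, 0 < C ∧ ∀ s : ℂ, 3/2 ≤ s.re → ‖deriv fz s / fz s‖ ≤ C := by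
  have hS : LSeriesSummable (fun n => (ArithmeticFunction.vonMangoldt n : ℂ)) ((3/2 : ℝ) : ℂ) :=
    ArithmeticFunction.LSeriesSummable_vonMangoldt (by rw [ofReal_re]; norm_num)
  refine ⟨2 + ∑' n, ‖LSeries.term (fun n => (ArithmeticFunction.vonMangoldt n : ℂ)) ((3/2 : ℝ) : ℂ) n‖,
    by positivity, fun s hs => ?_⟩
  rw [fz_logDeriv (by linarith)]
  refine (norm_sub_le _ _).trans (add_le_add ?_ (norm_LSeries_le hS hs))
  rw [norm_div, norm_one]
  have : 1/2 ≤ ‖s - 1‖ := by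
    refine le_trans ?_ (Complex.re_le_norm _)
    simp; linarith
  rw [div_le_iff₀ (by linarith)]; linarith

lemma fz_lower : ∃ c : ℝ, 0 < c ∧ ∀ t : ℝ, c ≤ ‖fz (2 + t * I)‖ := by
  have hS : LSeriesSummable (fun n => (ArithmeticFunction.moebius n : ℂ)) ((2 : ℝ) : ℂ) :=
    ArithmeticFunction.LSeriesSummable_moebius_iff.mpr (by rw [ofReal_re]; norm_num)
  set B := ∑' n, ‖LSeries.term (fun n => (ArithmeticFunction.moebius n : ℂ)) ((2 : ℝ) : ℂ) n‖
  have hB : 0 ≤ B := tsum_nonneg fun _ => norm_nonneg _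
  refine ⟨1 / (1 + B), by positivity, fun t => ?_⟩
  set s : ℂ := 2 + t * I with hsdef
  have hre : s.re = 2 := by simp [hsdef]
  have hs1 : s ≠ 1 := by intro h; rw [h] at hre; norm_num at hre
  have hz := ArithmeticFunction.LSeries_zeta_mul_Lseries_moebius (s := s) (by rw [hre]; norm_num)
  rw [ArithmeticFunction.LSeries_zeta_eq_riemannZeta (by rw [hre]; norm_num)] at hz
  have hm := norm_LSeries_le hS (s := s) (by rw [hre])
  have h1 : ‖riemannZeta s‖ * ‖LSeries (fun n => (ArithmeticFunction.moebius n : ℂ)) s‖ = 1 := by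
    rw [← norm_mul, hz, norm_one]
  have h2 : 1 ≤ ‖s - 1‖ := by
    refine le_trans ?_ (Complex.re_le_norm _)
    simp [hre]; norm_num
  rw [fz_eq hs1, norm_mul, div_le_iff₀ (by positivity)]
  have h3 : 1 ≤ ‖riemannZeta s‖ * (1 + B) := by
    calc 1 = _ := h1.symm
      _ ≤ _ := by gcongr; linarith
  nlinarith [norm_nonneg (riemannZeta s)]

noncomputable def bt (n : ℕ) (s : ℂ) : ℂ :=
  (s - 1) * ((n + 1 : ℝ) : ℂ) ^ (-s) + (((n + 2 : ℝ) : ℂ) ^ (1 - s) - ((n + 1 : ℝ) : ℂ) ^ (1 - s))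

lemma bt_bound (n : ℕ) {s : ℂ} (hs : 0 < s.re) :
    ‖bt n s‖ ≤ ‖s - 1‖ * ‖s‖ * (n + 1 : ℝ) ^ (-s.re - 1) := by
  set a : ℝ := n + 1 with ha
  have hapos : 0 < a := by positivity
  -- first-order estimate
  have h1 : ∀ y ∈ Icc a (a + 1), ‖(y : ℂ) ^ (-s) - (a : ℂ) ^ (-s)‖ ≤ ‖s‖ * a ^ (-s.re - 1) * (y - a) := by
    intro y hy
    refine norm_image_sub_le_of_norm_deriv_le_segment' (f := fun y : ℝ => (y : ℂ) ^ (-s))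
      (f' := fun y : ℝ => (-s) * (y : ℂ) ^ (-s - 1)) (b := a + 1) ?_ ?_ y hy
    · intro x hx
      have hx0 : 0 < x := hapos.trans_le hx.1
      refine HasDerivAt.hasDerivWithinAt ?_
      refine hasDerivAt_ofReal_cpow_const (x := x) (r := -s) hx0.ne' ?_
      intro h
      rw [neg_eq_zero] at h
      rw [h] at hs; simp at hs
    · intro x hx
      have hx0 : 0 < x := hapos.trans_le hx.1
      rw [norm_mul, norm_neg, Complex.norm_cpow_eq_rpow_re_of_pos hx0]
      gcongr ?_ * ?_
      simp only [sub_re, neg_re, one_re]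
      exact Real.rpow_le_rpow_of_nonpos hapos hx.1 (by linarith)
  have h2 := norm_image_sub_le_of_norm_deriv_le_segment' (a := a) (b := a + 1)
      (f := fun y : ℝ => (y : ℂ) ^ (1 - s) + (s - 1) * (y : ℂ) * (a : ℂ) ^ (-s))
      (f' := fun y : ℝ => (1 - s) * ((y : ℂ) ^ (-s) - (a : ℂ) ^ (-s)))
      (C := ‖s - 1‖ * (‖s‖ * a ^ (-s.re - 1))) ?_ ?_ (a + 1) (by constructor <;> linarith)
  · rw [show bt n s = ((((a + 1 : ℝ) : ℂ)) ^ (1 - s) + (s - 1) * ((a + 1 : ℝ) : ℂ) * (a : ℂ) ^ (-s)) -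
      ((a : ℂ) ^ (1 - s) + (s - 1) * (a : ℂ) * (a : ℂ) ^ (-s)) by
        rw [bt, ha, show ((n : ℝ) + 1 + 1) = n + 2 by ring]; push_cast; ring]
    refine h2.trans (le_of_eq ?_)
    ring
  · intro x hx
    have hx0 : 0 < x := hapos.trans_le hx.1
    refine HasDerivAt.hasDerivWithinAt ?_
    have e1 : HasDerivAt (fun y : ℝ => (y : ℂ) ^ (1 - s)) ((1 - s) * (x : ℂ) ^ (-s)) x := by
      have h0 : HasDerivAt (fun z : ℂ => z ^ (1 - s)) ((1 - s) * (x : ℂ) ^ (1 - s - 1) * 1) (x : ℂ) :=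
        (hasDerivAt_id (x : ℂ)).cpow_const (by left; simpa using hx0)
      have := h0.comp_ofReal
      refine this.congr_deriv ?_
      rw [mul_one]; congr 2; ring
    have e2 : HasDerivAt (fun y : ℝ => (s - 1) * (y : ℂ) * (a : ℂ) ^ (-s)) ((s - 1) * 1 * (a : ℂ) ^ (-s)) x :=
      ((Complex.ofRealCLM.hasDerivAt (x := x)).const_mul (s - 1)).mul_const _
    refine (e1.add e2).congr_deriv ?_
    ring
  · intro x hx
    rw [norm_mul, ← norm_neg, neg_sub]
    gcongr
    refine (h1 x ⟨hx.1, hx.2.le⟩).trans ?_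
    have : x - a ≤ 1 := by linarith [hx.2]
    have h5 : 0 ≤ ‖s‖ * a ^ (-s.re - 1) := by positivity
    nlinarith

lemma summable_bt {a : ℝ} (ha : 0 < a) : Summable fun n : ℕ => (n + 1 : ℝ) ^ (-a - 1) := by
  have := (summable_nat_add_iff 1).mpr (Real.summable_nat_rpow.mpr (show -a - 1 < -1 by linarith))
  refine this.congr fun n => ?_
  push_cast; rfl

lemma fz_eq_series {s : ℂ} (hs : 0 < s.re) : fz s = 1 + ∑' n, bt n s := by
  have hopen : IsOpen {s : ℂ | 0 < s.re} := isOpen_lt continuous_const continuous_re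
  have hconv : IsPreconnected {s : ℂ | 0 < s.re} := (convex_halfSpace_re_gt 0).isPreconnected
  have hd : DifferentiableOn ℂ (fun s => 1 + ∑' n, bt n s) {s : ℂ | 0 < s.re} := by
    intro z hz
    have hz : 0 < z.re := hz
    -- local bound
    set U : Set ℂ := {w : ℂ | z.re / 2 < w.re} ∩ Metric.ball z 1 with hU
    have hUo : IsOpen U := (isOpen_lt continuous_const continuous_re).inter Metric.isOpen_ball
    have hzU : z ∈ U := ⟨by simp; linarith, Metric.mem_ball_self one_pos⟩
    have h := differentiableOn_tsum_of_summable_norm (F := bt) (U := U)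
      (u := fun n : ℕ => ((‖z‖ + 2) * (‖z‖ + 1)) * (n + 1 : ℝ) ^ (-(z.re/2) - 1))
      ((summable_bt (by linarith : 0 < z.re/2)).mul_left _) ?_ hUo ?_
    · exact ((h.differentiableAt (hUo.mem_nhds hzU)).const_add 1).differentiableWithinAt
    · intro n w hw
      have p1 : ((n + 1 : ℝ) : ℂ) ≠ 0 := by
        have : (n + 1 : ℝ) ≠ 0 := by positivity
        exact_mod_cast this
      have p2 : ((n + 2 : ℝ) : ℂ) ≠ 0 := by
        have : (n + 2 : ℝ) ≠ 0 := by positivity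
        exact_mod_cast this
      unfold bt
      refine DifferentiableAt.differentiableWithinAt ?_
      refine ((differentiableAt_id.sub_const 1).mul ?_).add (DifferentiableAt.sub ?_ ?_)
      · exact differentiableAt_id.neg.const_cpow (Or.inl p1)
      · exact (differentiableAt_id.const_sub 1).const_cpow (Or.inl p2)
      · exact (differentiableAt_id.const_sub 1).const_cpow (Or.inl p1)
    · intro n w hw
      have hw1 : z.re/2 < w.re := hw.1
      have hw2 : ‖w - z‖ < 1 := by simpa [dist_eq_norm] using hw.2
      have hw3 : ‖w‖ ≤ ‖z‖ + 1 := by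
        have : ‖w‖ ≤ ‖w - z‖ + ‖z‖ := by simpa using norm_add_le (w - z) z
        linarith
      have hw4 : ‖w - 1‖ ≤ ‖z‖ + 2 := by
        have : ‖w - 1‖ ≤ ‖w‖ + 1 := by simpa using norm_sub_le w 1
        linarith
      refine (bt_bound n (by linarith)).trans ?_
      gcongr
      · linarith [(Nat.cast_nonneg n : (0:ℝ) ≤ n)]
  have heq : ∀ s : ℂ, 1 < s.re → fz s = 1 + ∑' n, bt n s := by
    intro s hs
    have h1 : s ≠ 1 := by rintro rfl; simp at hs
    have hsum : Summable fun n : ℕ => 1 / ((n : ℂ) + 1) ^ s := by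
      have := (summable_nat_add_iff 1).mpr (Complex.summable_one_div_nat_cpow.mpr hs)
      refine this.congr fun n => ?_
      push_cast; rfl
    have hbs : Summable fun n => bt n s := by
      refine Summable.of_norm_bounded ((summable_bt (by linarith : 0 < s.re)).mul_left (‖s - 1‖ * ‖s‖)) ?_
      intro n; exact bt_bound n (by linarith)
    have ht1 := hbs.hasSum.tendsto_sum_nat
    have ht2 := hsum.hasSum.tendsto_sum_nat.const_mul (s - 1)
    have ht3 : Tendsto (fun N : ℕ => ((N + 1 : ℝ) : ℂ) ^ (1 - s) - 1) atTop (𝓝 (0 - 1)) := by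
      refine Tendsto.sub_const ?_ 1
      rw [tendsto_zero_iff_norm_tendsto_zero]
      have : Tendsto (fun N : ℕ => ((N : ℝ) + 1) ^ (-(s.re - 1))) atTop (𝓝 0) :=
        (tendsto_rpow_neg_atTop (by linarith)).comp
          (tendsto_atTop_add_const_right _ _ tendsto_natCast_atTop_atTop)
      refine this.congr fun N => ?_
      rw [Complex.norm_cpow_eq_rpow_re_of_pos (by positivity)]
      simp
    have hfin : ∀ N : ℕ, ∑ n ∈ Finset.range N, bt n s =
        (s - 1) * ∑ n ∈ Finset.range N, 1 / ((n : ℂ) + 1) ^ s + (((N + 1 : ℝ) : ℂ) ^ (1 - s) - 1) := by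
      intro N
      induction N with
      | zero => simp
      | succ k ih =>
        rw [Finset.sum_range_succ, Finset.sum_range_succ, ih, bt, Complex.cpow_neg]
        push_cast
        rw [show (k : ℂ) + 1 + 1 = k + 2 by ring]
        ring
    have ht4 := (ht2.add ht3).congr (fun N => (hfin N).symm)
    have := tendsto_nhds_unique ht1 ht4
    rw [this, fz_eq h1, zeta_eq_tsum_one_div_nat_add_one_cpow hs]
    ring
  have := AnalyticOnNhd.eqOn_of_preconnected_of_eventuallyEq (𝕜 := ℂ) (f := fz)
    (g := fun s => 1 + ∑' n, bt n s) (z₀ := 2)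
    (fz_differentiable.differentiableOn.analyticOnNhd hopen) (hd.analyticOnNhd hopen) hconv
    (by simp) ?_
  · exact this hs
  · filter_upwards [(isOpen_lt continuous_const continuous_re).mem_nhds (show (2:ℂ) ∈ {s : ℂ | 1 < s.re} by simp)] with z hz
    exact heq z hz

lemma fz_bound : ∃ C : ℝ, 1 ≤ C ∧ ∀ s : ℂ, 1/10 ≤ s.re → ‖fz s‖ ≤ C * (1 + ‖s‖) ^ 2 := by
  have hsum := summable_bt (show (0:ℝ) < 1/10 by norm_num)
  set B := ∑' n : ℕ, (n + 1 : ℝ) ^ (-(1/10 : ℝ) - 1)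
  have hB : 0 ≤ B := tsum_nonneg fun n => by positivity
  refine ⟨1 + B, by linarith, fun s hs => ?_⟩
  rw [fz_eq_series (by linarith)]
  have h1 : ‖∑' n, bt n s‖ ≤ ‖s - 1‖ * ‖s‖ * B := by
    refine tsum_of_norm_bounded (hsum.hasSum.mul_left (‖s - 1‖ * ‖s‖)) fun n => ?_
    refine (bt_bound n (by linarith)).trans ?_
    gcongr
    linarith [(Nat.cast_nonneg n : (0:ℝ) ≤ n)]
  have h2 : ‖s - 1‖ ≤ 1 + ‖s‖ := by
    have := norm_sub_le s 1; rw [norm_one] at this; linarith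
  have h3 := norm_nonneg s
  calc ‖1 + ∑' n, bt n s‖ ≤ 1 + ‖s - 1‖ * ‖s‖ * B := by
        refine (norm_add_le _ _).trans ?_
        rw [norm_one]; linarith
    _ ≤ (1 + ‖s‖)^2 + (1 + ‖s‖) * (1 + ‖s‖) * B := by
        gcongr
        · nlinarith
        · linarith
    _ = _ := by ring

lemma bc_lemma {h : ℂ → ℂ} {z0 : ℂ} {R r A : ℝ} (hr : 0 < r) (hrR : r < R) (hA : 0 < A)
    (hd : DifferentiableOn ℂ h (Metric.ball z0 R)) (hne : ∀ z ∈ Metric.ball z0 R, h z ≠ 0)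
    (hb : ∀ z ∈ Metric.ball z0 R, ‖h z‖ ≤ Real.exp A * ‖h z0‖) {z : ℂ}
    (hz : z ∈ Metric.closedBall z0 r) :
    ‖deriv h z / h z‖ ≤ 4 * (R + r) / (R - r) ^ 2 * A ∧
      Real.exp (-(2 * (R + r) / (R - r) * A)) * ‖h z0‖ ≤ ‖h z‖ := by
  have hR : 0 < R := hr.trans hrR
  have hz0 : z0 ∈ Metric.ball z0 R := Metric.mem_ball_self hR
  have hop : IsOpen (Metric.ball z0 R) := Metric.isOpen_ball
  have hdd : DifferentiableOn ℂ (fun z => deriv h z / h z) (Metric.ball z0 R) :=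
    (hd.deriv hop).div hd hne
  obtain ⟨L, hL0, hL⟩ := hdd.isExactOn_ball.with_val_at z0 0
  have hexp : ∀ z ∈ Metric.ball z0 R, h z = h z0 * exp (L z) := by
    intro z hz
    have hder : ∀ w ∈ Metric.ball z0 R, HasDerivAt (fun w => h w * exp (-L w)) 0 w := by
      intro w hw
      have h1 := (hd.differentiableAt (hop.mem_nhds hw)).hasDerivAt
      have h2 := (hL w hw).neg.cexp
      refine (h1.mul h2).congr_deriv ?_
      have := hne w hw
      simp only [Pi.neg_apply]
      field_simp
      ring
    have := hop.is_const_of_deriv_eq_zero (convex_ball z0 R).isPreconnected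
      (fun w hw => (hder w hw).differentiableAt.differentiableWithinAt)
      (fun w hw => (hder w hw).deriv) hz hz0
    simp only [hL0, neg_zero, Complex.exp_zero, mul_one] at this
    rw [← this, mul_assoc, ← Complex.exp_add]; simp
  have hh0 : 0 < ‖h z0‖ := norm_pos_iff.mpr (hne z0 hz0)
  have hnorm : ∀ z ∈ Metric.ball z0 R, ‖h z‖ = ‖h z0‖ * Real.exp (L z).re := by
    intro z hz
    rw [hexp z hz, norm_mul, Complex.norm_exp]
  have hLre : ∀ z ∈ Metric.ball z0 R, (L z).re ≤ A := by
    intro z hz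
    have h1 := hb z hz
    rw [hnorm z hz, mul_comm] at h1
    exact Real.exp_le_exp.mp (le_of_mul_le_mul_right h1 hh0)
  set r1 := (r + R) / 2 with hr1
  have hLb : ∀ z ∈ Metric.closedBall z0 r1, ‖L z‖ ≤ 2 * (R + r) / (R - r) * A := by
    intro z hz
    have hz' : ‖z - z0‖ ≤ r1 := by simpa [dist_eq_norm] using hz
    have := Complex.borelCaratheodory_zero (f := fun w => L (z0 + w)) (R := R) (z := z - z0) hA ?_ ?_ hR ?_ (by simpa using hL0)
    · simp only [add_sub_cancel] at this
      refine this.trans ?_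
      have h3 : 0 < R - r1 := by rw [hr1]; linarith
      have h4 : 0 < R - r := by linarith
      calc 2 * A * ‖z - z0‖ / (R - ‖z - z0‖) ≤ 2 * A * r1 / (R - r1) := by gcongr
        _ = _ := by
          rw [show R - r1 = (R - r) / 2 by rw [hr1]; ring, hr1]
          field_simp
          ring
    · intro w hw
      refine DifferentiableAt.differentiableWithinAt ?_
      have : z0 + w ∈ Metric.ball z0 R := by simpa [dist_eq_norm] using hw
      exact (hL _ this).differentiableAt.comp w (differentiableAt_id.const_add z0)
    · intro w hw
      have : z0 + w ∈ Metric.ball z0 R := by simpa [dist_eq_norm] using hw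
      exact hLre _ this
    · simp; rw [hr1] at hz'; linarith
  have hzr : ‖z - z0‖ ≤ r := by simpa [dist_eq_norm] using hz
  have hzR : z ∈ Metric.ball z0 R := by simpa [dist_eq_norm] using hzr.trans_lt hrR
  constructor
  · have hr2 : 0 < (R - r) / 2 := by linarith
    have hsub : Metric.closedBall z ((R - r) / 2) ⊆ Metric.closedBall z0 r1 := by
      refine Metric.closedBall_subset_closedBall' ?_
      rw [dist_eq_norm, hr1]; linarith
    have hsub2 : Metric.closedBall z0 r1 ⊆ Metric.ball z0 R :=
      Metric.closedBall_subset_ball (by rw [hr1]; linarith)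
    have hc := Complex.norm_deriv_le_of_forall_mem_sphere_norm_le (f := L) (c := z) hr2
      (C := 2 * (R + r) / (R - r) * A) ?_ ?_
    · rw [(hL z hzR).deriv] at hc
      refine hc.trans (le_of_eq ?_)
      have : R - r ≠ 0 := by linarith
      field_simp
      ring
    · refine DifferentiableOn.diffContOnCl_ball (U := Metric.closedBall z ((R - r) / 2)) ?_ le_rfl
      exact fun w hw => (hL w (hsub2 (hsub hw))).differentiableAt.differentiableWithinAt
    · intro w hw
      exact hLb w (hsub (Metric.sphere_subset_closedBall hw))
  · rw [hnorm z hzR, mul_comm]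
    gcongr
    have h1 := hLb z (Metric.closedBall_subset_closedBall (by rw [hr1]; linarith) hz)
    have h2 := Complex.abs_re_le_norm (L z)
    have := neg_abs_le (L z).re
    linarith

/-- one Blaschke-factor computation -/
lemma blaschke_re (y d : ℝ) (hy : |y| ≤ 9/10) (hd : 0 < d) (hd1 : d ≤ 1/4) :
    0 ≤ (1 / ((d : ℂ) - y * I) + (-(y * I)) / (1 + y * I * d)).re := by
  have hy2 : y ^ 2 ≤ 1 := by
    have := abs_le.mp hy; nlinarith
  have e1 : (d : ℂ) - y * I ≠ 0 := by
    intro h; have := congrArg Complex.re h; simp at this; linarith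
  have e2 : (1 : ℂ) + y * I * d ≠ 0 := by
    intro h; have := congrArg Complex.re h; simp at this
  have : (1 / ((d : ℂ) - y * I) + (-(y * I)) / (1 + y * I * d)) =
      ((1 - y^2 : ℝ) : ℂ) * (((d : ℂ) - y * I) * (1 + y * I * d))⁻¹ := by
    rw [div_add_div _ _ e1 e2, ← div_eq_mul_inv]
    congr 1
    push_cast
    linear_combination (y:ℂ)^2 * I_sq
  rw [this, Complex.re_ofReal_mul, Complex.inv_re]
  refine mul_nonneg (by linarith) (div_nonneg ?_ (normSq_nonneg _))
  simp
  nlinarith [mul_nonneg hd.le (sq_nonneg y)]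

lemma blaschke_norm (y : ℝ) (hy : |y| ≤ 9/10) :
    ‖((1/4 : ℝ) : ℂ) - y * I‖ ≤ 23/25 * ‖1 + y * I * (1/4 : ℝ)‖ := by
  have hy2 : y ^ 2 ≤ 81/100 := by
    have := abs_le.mp hy; nlinarith
  refine abs_le_of_sq_le_sq' ?_ (by positivity) |>.2
  rw [mul_pow, Complex.sq_norm, Complex.sq_norm, normSq_apply, normSq_apply]
  simp
  nlinarith

lemma blaschke_sphere (y : ℝ) {w : ℂ} (hw : ‖w‖ = 1) : ‖1 + y * I * w‖ = ‖w - y * I‖ := by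
  have h1 : w.re * w.re + w.im * w.im = 1 := by
    rw [← normSq_apply, ← Complex.sq_norm, hw]; norm_num
  rw [← sq_eq_sq₀ (norm_nonneg _) (norm_nonneg _), Complex.sq_norm, Complex.sq_norm, normSq_apply, normSq_apply]
  simp
  linear_combination (y^2 - 1) * h1

lemma blaschke_induct {M A d : ℝ} (hA : 0 < A) (hd : 0 < d) (hd1 : d ≤ 1/4) (k : ℕ) :
    ∀ F : ℂ → ℂ, DifferentiableOn ℂ F (Metric.ball 0 (5/4)) →
    (∀ w ∈ Metric.ball (0:ℂ) 1, F w = 0 → w.re = 0) →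
    (∀ w ∈ Metric.closedBall (0:ℂ) 1, ‖F w‖ ≤ M) → F (1/4 : ℝ) ≠ 0 → M ≤ Real.exp A * ‖F (1/4 : ℝ)‖ →
    M * (23/25) ^ k < ‖F (1/4 : ℝ)‖ → -(23 * A) ≤ (deriv F d / F d).re := by
  induction k with
  | zero =>
    intro F _ _ h3 _ _ h6
    have : ((1/4 : ℝ) : ℂ) ∈ Metric.closedBall (0:ℂ) 1 := by simp; norm_num
    have := h3 _ this
    simp only [pow_zero, mul_one] at h6
    linarith
  | succ k ih =>
    intro F hF hz hM hF0 hMA hk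
    by_cases hex : ∃ w ∈ Metric.ball (0:ℂ) (9/10), F w = 0
    · obtain ⟨w, hw, hFw⟩ := hex
      have hwn : ‖w‖ < 9/10 := by simpa using hw
      have hwre := hz w (by simp; linarith) hFw
      set y := w.im
      have hwy : w = y * I := by apply Complex.ext <;> simp [hwre, y]
      have hy : |y| ≤ 9/10 := (Complex.abs_im_le_norm w).trans hwn.le
      have hball : Metric.ball (0:ℂ) (5/4) ∈ 𝓝 w := Metric.isOpen_ball.mem_nhds (by simp; linarith)
      have hG : DifferentiableOn ℂ (dslope F w) (Metric.ball 0 (5/4)) :=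
        (Complex.differentiableOn_dslope hball).mpr hF
      have hfac : ∀ z, F z = (z - y * I) * dslope F w z := by
        intro z
        have := sub_smul_dslope F w z
        rw [hFw, sub_zero, smul_eq_mul] at this
        rw [← this, hwy]
      set F2 : ℂ → ℂ := fun z => (1 + y * I * z) * dslope F w z with hF2
      have hF2d : DifferentiableOn ℂ F2 (Metric.ball 0 (5/4)) :=
        (((differentiable_id.const_mul (y * I)).const_add 1).differentiableOn).mul hG
      have hden : ∀ z ∈ Metric.ball (0:ℂ) 1, (1 + y * I * z) ≠ 0 := by
        intro z hz h
        have hz1 : ‖z‖ < 1 := by simpa using hz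
        have : ‖(y * I * z : ℂ)‖ = 1 := by
          rw [show (y * I * z : ℂ) = -1 by linear_combination h]; simp
        rw [norm_mul, norm_mul, Complex.norm_I, Complex.norm_real, Real.norm_eq_abs] at this
        nlinarith [norm_nonneg z, abs_nonneg y]
      have hnum : ∀ z : ℂ, 0 < z.re → z - y * I ≠ 0 := by
        intro z hz h
        have := congrArg Complex.re h
        simp at this; linarith
      have hq : ‖F (1/4:ℝ)‖ ≤ 23/25 * ‖F2 (1/4:ℝ)‖ := by
        rw [hfac, hF2, norm_mul, norm_mul, ← mul_assoc]
        exact mul_le_mul_of_nonneg_right (blaschke_norm y hy) (norm_nonneg _)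
      have hpos : 0 < ‖F (1/4:ℝ)‖ := norm_pos_iff.mpr hF0
      have hge : ‖F (1/4:ℝ)‖ ≤ ‖F2 (1/4:ℝ)‖ := by linarith [norm_nonneg (F2 (1/4:ℝ))]
      have := ih F2 hF2d ?_ ?_ ?_ ?_ ?_
      · have hd0 : (d : ℂ) - y * I ≠ 0 := hnum d (by simpa using hd)
        have hdball : (d : ℂ) ∈ Metric.ball (0:ℂ) 1 := by
          simp [abs_of_pos hd]; linarith
        have hd2 := hden d hdball
        have hdn : Metric.ball (0:ℂ) (5/4) ∈ 𝓝 (d:ℂ) :=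
          Metric.isOpen_ball.mem_nhds (Metric.ball_subset_ball (by norm_num) hdball)
        by_cases hFd : dslope F w d = 0
        · have : F d = 0 := by rw [hfac, hFd, mul_zero]
          rw [this]; simp; linarith
        have hGd := (hG.differentiableAt hdn).hasDerivAt
        have e1 : HasDerivAt F (1 * dslope F w d + (d - y * I) * deriv (dslope F w) d) d := by
          have := ((hasDerivAt_id (d:ℂ)).sub_const (y * I)).mul hGd
          exact this.congr_of_eventuallyEq (Eventually.of_forall hfac)
        have e2 : HasDerivAt F2 (y * I * dslope F w d + (1 + y * I * d) * deriv (dslope F w) d) d := by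
          have := (((hasDerivAt_id (d:ℂ)).const_mul (y * I)).const_add 1).mul hGd
          refine this.congr_deriv ?_
          simp
        have key : deriv F d / F d = (1 / ((d : ℂ) - y * I) + (-(y * I)) / (1 + y * I * d)) + deriv F2 d / F2 d := by
          rw [e1.deriv, e2.deriv, hfac, hF2]
          simp only
          generalize hD : (1 + y * I * (d:ℂ)) = D at hd2
          generalize hN : ((d:ℂ) - y * I) = N at hd0
          field_simp
          ring
        rw [key, Complex.add_re]
        have := blaschke_re y d hy hd hd1
        linarith
      · intro z hz1 hz0
        rcases mul_eq_zero.mp hz0 with h | h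
        · exact absurd h (hden z hz1)
        · exact hz z hz1 (by rw [hfac, h, mul_zero])
      · intro z hz1
        refine Complex.norm_le_of_forall_mem_frontier_norm_le (U := Metric.ball (0:ℂ) 1) Metric.isBounded_ball
          (hF2d.diffContOnCl_ball (Metric.closedBall_subset_ball (by norm_num))) ?_ ?_
        · intro u hu
          rw [frontier_ball _ one_ne_zero] at hu
          have hu1 : ‖u‖ = 1 := by simpa using hu
          have := hM u (Metric.sphere_subset_closedBall hu)
          rw [hfac, norm_mul] at this
          rw [hF2]; simp only
          rw [norm_mul, blaschke_sphere y hu1]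
          exact this
        · rwa [closure_ball _ one_ne_zero]
      · exact norm_pos_iff.mp (by linarith)
      · exact hMA.trans (by gcongr)
      · rw [pow_succ] at hk
        nlinarith
    · push Not at hex
      have hsub : Metric.ball ((1/4 : ℝ) : ℂ) (13/20) ⊆ Metric.ball (0:ℂ) (9/10) := by
        refine Metric.ball_subset_ball' ?_
        rw [dist_zero_right, Complex.norm_real]; norm_num
      have := (bc_lemma (h := F) (z0 := (1/4 : ℝ)) (R := 13/20) (r := 1/4) (A := A) (z := d)
        (by norm_num) (by norm_num) hA
        (hF.mono (hsub.trans (Metric.ball_subset_ball (by norm_num))))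
        (fun z hz => hex z (hsub hz)) ?_ ?_).1
      · have h2 := neg_abs_le (deriv F d / F d).re
        have h3 := Complex.abs_re_le_norm (deriv F d / F d)
        norm_num at this
        norm_num at h2 h3 ⊢
        linarith
      · intro z hz
        refine (hM z ?_).trans hMA
        exact Metric.ball_subset_closedBall (Metric.ball_subset_ball (by norm_num) (hsub hz))
      · rw [Metric.mem_closedBall, dist_eq_norm, ← Complex.ofReal_sub, Complex.norm_real, Real.norm_eq_abs, abs_le]
        constructor <;> linarith

noncomputable def Lg (t : ℝ) : ℝ := Real.log (|t| + 3)

noncomputable def Gz (s : ℂ) : ℂ := deriv fz s / fz s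

lemma Lg_ge_one (t : ℝ) : 1 ≤ Lg t := by
  rw [Lg, Real.le_log_iff_exp_le (by positivity)]
  have := Real.exp_one_lt_d9
  linarith [abs_nonneg t]

lemma Lg_pos (t : ℝ) : 0 < Lg t := by linarith [Lg_ge_one t]

lemma exp_Lg (t : ℝ) : Real.exp (Lg t) = |t| + 3 := Real.exp_log (by positivity)

lemma const_le_exp_Lg {c : ℝ} (hc : 0 < c) (t : ℝ) : c ≤ Real.exp (|Real.log c| * Lg t) := by
  rw [← Real.log_le_iff_le_exp hc]
  nlinarith [le_abs_self (Real.log c), abs_nonneg (Real.log c), Lg_ge_one t]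

lemma fz_growth : ∃ K : ℝ, 0 < K ∧ ∀ (t : ℝ) (z : ℂ), 1/10 ≤ z.re → ‖z‖ ≤ |t| + 4 →
    ‖fz z‖ ≤ Real.exp (K * Lg t) := by
  obtain ⟨C, hC, h⟩ := fz_bound
  refine ⟨|Real.log C| + 4, by positivity, fun t z hz hzt => (h z hz).trans ?_⟩
  rw [add_mul, Real.exp_add]
  have h1 : Real.exp (4 * Lg t) = (|t| + 3)^4 := by
    rw [← exp_Lg, ← Real.exp_nat_mul]; norm_num
  rw [h1]
  have h2 : 1 + ‖z‖ ≤ (|t| + 3)^2 := by nlinarith [abs_nonneg t]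
  calc C * (1 + ‖z‖)^2 ≤ Real.exp (|Real.log C| * Lg t) * ((|t| + 3)^2)^2 := by
        gcongr
        exact const_le_exp_Lg (by linarith) t
    _ = _ := by ring

section
variable (RH : ∀ s : ℂ, riemannZeta s = 0 → 0 < s.re → s.re < 1 → s.re = 1 / 2)
set_option linter.unusedSectionVars false
include RH

lemma Gz_bound {η : ℝ} (hη : 0 < η) (hη1 : η ≤ 1) : ∃ C : ℝ, 0 < C ∧ ∀ s : ℂ, 1/2 + η ≤ s.re → s.re ≤ 2 →
    ‖Gz s‖ ≤ C * Lg s.im ∧ Real.exp (-(C * Lg s.im)) ≤ ‖fz s‖ := by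
  obtain ⟨K, hK, hg⟩ := fz_growth
  obtain ⟨c, hc, hl⟩ := fz_lower
  set R : ℝ := 3/2 with hR
  set r : ℝ := 3/2 - η with hr
  set B : ℝ := K + |Real.log c⁻¹| with hB
  have hB0 : 0 < B := by positivity
  have hRr : 0 < R - r := by rw [hR, hr]; linarith
  have hr0 : 0 < r := by rw [hr]; linarith
  have hRr' : 0 < R + r := by positivity
  refine ⟨4 * (R + r) / (R - r) ^ 2 * B + (2 * (R + r) / (R - r) * B + |Real.log c⁻¹|), by positivity, fun s hs1 hs2 => ?_⟩
  set t := s.im with ht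
  have hLt := Lg_pos t
  have hcl := const_le_exp_Lg (inv_pos.mpr hc) t
  have hre : ∀ z ∈ Metric.ball (2 + t * I : ℂ) R, 1/2 < z.re ∧ ‖z‖ ≤ |t| + 4 := by
    intro z hz
    have h1 : ‖z - (2 + t * I)‖ < 3/2 := by simpa [dist_eq_norm, hR] using hz
    have h2 := (abs_lt.mp ((Complex.abs_re_le_norm _).trans_lt h1)).1
    constructor
    · simp at h2; linarith
    · have h3 : ‖z‖ ≤ ‖z - (2 + t * I)‖ + ‖(2 + t * I : ℂ)‖ := by
        simpa using norm_add_le (z - (2 + t * I)) (2 + t * I)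
      have h4 : ‖(2 + t * I : ℂ)‖ ≤ 2 + |t| := by
        refine (norm_add_le _ _).trans ?_
        simp
      linarith
  have key := bc_lemma (h := fz) (z0 := 2 + t * I) (R := R) (r := r) (A := B * Lg t) (z := s) hr0 (by linarith)
    (by positivity) fz_differentiable.differentiableOn (fun z hz => fz_ne_zero RH (hre z hz).1) ?_ ?_
  · constructor
    · refine key.1.trans ?_
      rw [← mul_assoc]
      gcongr
      have : 0 ≤ 2 * (R + r) / (R - r) * B + |Real.log c⁻¹| := by positivity
      linarith
    · refine le_trans ?_ key.2
      have h5 : Real.exp (-(|Real.log c⁻¹| * Lg t)) ≤ ‖fz (2 + t * I)‖ := by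
        refine le_trans ?_ (hl t)
        rw [Real.exp_neg]
        exact inv_le_of_inv_le₀ hc hcl
      refine le_trans ?_ (mul_le_mul_of_nonneg_left h5 (Real.exp_pos _).le)
      rw [← Real.exp_add]
      gcongr
      have : 0 ≤ 4 * (R + r) / (R - r) ^ 2 * B * Lg t := by positivity
      nlinarith
  · intro z hz
    refine (hg t z (by linarith [(hre z hz).1]) (hre z hz).2).trans ?_
    rw [hB, add_mul, Real.exp_add, mul_assoc]
    refine le_mul_of_one_le_right (Real.exp_pos _).le ?_
    calc 1 = c⁻¹ * c := by field_simp
      _ ≤ _ := by gcongr; exact hl t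
  · rw [Metric.mem_closedBall, dist_eq_norm]
    have : s - (2 + t * I) = ((s.re - 2 : ℝ) : ℂ) := by
      apply Complex.ext <;> simp [ht]
    rw [this, Complex.norm_real, Real.norm_eq_abs, abs_le, hr]
    constructor <;> linarith

lemma Gz_re_lower_near : ∃ C : ℝ, 0 < C ∧ ∀ s : ℂ, 1/2 < s.re → s.re ≤ 3/5 → -(C * Lg s.im) ≤ (Gz s).re := by
  obtain ⟨K, hK, hg⟩ := fz_growth
  obtain ⟨C, hC, hGb⟩ := Gz_bound RH (η := 1/10) (by norm_num) (by norm_num)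
  refine ⟨5/2 * (23 * (K + C)), by positivity, fun s hs1 hs2 => ?_⟩
  set t := s.im with ht
  have hLt := Lg_pos t
  set c : ℂ := ((1/2 : ℝ) : ℂ) + t * I with hc
  set F : ℂ → ℂ := fun w => fz (c + ((2/5 : ℝ) : ℂ) * w) with hF
  set d : ℝ := (s.re - 1/2) * (5/2) with hd
  have hcd : c + ((2/5 : ℝ) : ℂ) * d = s := by
    apply Complex.ext
    · simp [hc, hd]; ring
    · simp [hc, ht]
  have hFd : ∀ w, HasDerivAt F (deriv fz (c + ((2/5 : ℝ) : ℂ) * w) * ((2/5 : ℝ) : ℂ)) w := by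
    intro w
    have h1 : HasDerivAt (fun w : ℂ => c + ((2/5 : ℝ) : ℂ) * w) ((2/5 : ℝ) : ℂ) w := by
      simpa using ((hasDerivAt_id w).const_mul ((2/5 : ℝ) : ℂ)).const_add c
    exact (fz_differentiable _).hasDerivAt.comp w h1
  have hF14 : Real.exp (-(C * Lg t)) ≤ ‖F (1/4:ℝ)‖ := by
    have := (hGb (c + ((2/5 : ℝ) : ℂ) * (1/4:ℝ)) (by simp [hc]; norm_num) (by simp [hc]; norm_num)).2
    have him : (c + ((2/5 : ℝ) : ℂ) * (1/4:ℝ)).im = t := by simp [hc]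
    rw [him] at this
    exact this
  have hpos : 0 < ‖F (1/4:ℝ)‖ := (Real.exp_pos _).trans_le hF14
  have hlim : ∃ k : ℕ, Real.exp (K * Lg t) * (23/25) ^ k < ‖F (1/4:ℝ)‖ := by
    have := (tendsto_pow_atTop_nhds_zero_of_lt_one (r := (23/25:ℝ)) (by norm_num) (by norm_num)).const_mul (Real.exp (K * Lg t))
    rw [mul_zero] at this
    exact (this.eventually_lt_const hpos).exists
  obtain ⟨k, hk⟩ := hlim
  have key := blaschke_induct (M := Real.exp (K * Lg t)) (A := (K + C) * Lg t) (d := d) (by positivity)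
    (by rw [hd]; linarith) (by rw [hd]; linarith) k F (fun w _ => (hFd w).differentiableAt.differentiableWithinAt)
    ?_ ?_ (norm_pos_iff.mp hpos) ?_ hk
  · rw [(hFd d).deriv, hF] at key
    simp only [hcd] at key
    rw [show deriv fz s * ((2/5 : ℝ) : ℂ) / fz s = ((2/5 : ℝ) : ℂ) * Gz s by rw [Gz]; ring, Complex.re_ofReal_mul] at key
    linarith
  · intro w hw h0
    have hw1 : ‖w‖ < 1 := by simpa using hw
    have h2 := abs_lt.mp ((Complex.abs_re_le_norm w).trans_lt hw1)
    have hre : (c + ((2/5 : ℝ) : ℂ) * w).re = 1/2 + 2/5 * w.re := by simp [hc]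
    have := fz_zero_re RH (s := c + ((2/5 : ℝ) : ℂ) * w) (by rw [hre]; linarith) (by rw [hre]; linarith) h0
    rw [hre] at this
    linarith
  · intro w hw
    have hw1 : ‖w‖ ≤ 1 := by simpa using hw
    have h2 := abs_le.mp ((Complex.abs_re_le_norm w).trans hw1)
    have hre : (c + ((2/5 : ℝ) : ℂ) * w).re = 1/2 + 2/5 * w.re := by simp [hc]
    refine hg t _ (by rw [hre]; linarith) ?_
    calc ‖c + ((2/5 : ℝ) : ℂ) * w‖ ≤ ‖c‖ + ‖((2/5 : ℝ) : ℂ) * w‖ := norm_add_le _ _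
      _ ≤ (1/2 + |t|) + 2/5 * 1 := by
        gcongr
        · refine (norm_add_le _ _).trans ?_
          rw [Complex.norm_real, norm_mul, Complex.norm_real, Complex.norm_I]
          simp
        · rw [norm_mul, Complex.norm_real, Real.norm_of_nonneg (by norm_num)]
          gcongr
      _ ≤ _ := by linarith
  · calc Real.exp (K * Lg t) = Real.exp ((K + C) * Lg t) * Real.exp (-(C * Lg t)) := by
          rw [← Real.exp_add]; ring_nf
      _ ≤ _ := by gcongr

lemma Gz_re_lower : ∃ C : ℝ, 0 < C ∧ ∀ s : ℂ, 1/2 < s.re → s.re ≤ 2 → -(C * Lg s.im) ≤ (Gz s).re := by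
  obtain ⟨C1, hC1, h1⟩ := Gz_re_lower_near RH
  obtain ⟨C2, hC2, h2⟩ := Gz_bound RH (η := 1/10) (by norm_num) (by norm_num)
  refine ⟨C1 + C2, by positivity, fun s hs hs2 => ?_⟩
  have hL := Lg_pos s.im
  by_cases h : s.re ≤ 3/5
  · have := h1 s hs h
    nlinarith
  · have := (h2 s (by linarith) hs2).1
    have h3 := neg_abs_le (Gz s).re
    have h4 := Complex.abs_re_le_norm (Gz s)
    nlinarith

lemma Gz_differentiableAt {s : ℂ} (hs : 1/2 < s.re) : DifferentiableAt ℂ Gz s :=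
  ((fz_differentiable.analyticAt s).deriv.differentiableAt).div (fz_differentiable s) (fz_ne_zero RH hs)

end

noncomputable def wt (r t : ℝ) : ℝ := (1 + |t|) ^ (-r)

lemma wt_pos (r t : ℝ) : 0 < wt r t := by unfold wt; positivity

lemma wt_integrable {r : ℝ} (hr : 1 < r) : MeasureTheory.Integrable (wt r) := by
  have := integrable_one_add_norm (E := ℝ) (μ := MeasureTheory.volume) (r := r) (by simpa using hr)
  exact this

lemma wt_integral {r : ℝ} (hr : 1 < r) : ∫ t, wt r t = 2 / (r - 1) := by
  have h := integral_comp_abs (f := fun u : ℝ => (1 + u) ^ (-r))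
  unfold wt
  rw [h]
  have h2 : ∫ x in Ioi (0:ℝ), (1 + x) ^ (-r) = ∫ x in Ioi (0 + 1:ℝ), x ^ (-r) := by
    have := MeasureTheory.integral_indicator (μ := MeasureTheory.volume) (f := fun x : ℝ => x ^ (-r))
      (measurableSet_Ioi (a := (0 + 1 : ℝ)))
    rw [← this, ← MeasureTheory.integral_indicator measurableSet_Ioi,
      ← MeasureTheory.integral_add_left_eq_self ((Ioi (0 + 1:ℝ)).indicator _) (1:ℝ)]
    congr 1
    ext x
    simp only [indicator, mem_Ioi, zero_add, lt_add_iff_pos_right]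
  have h3 := integral_Ioi_rpow_of_lt (a := -r) (by linarith) (c := 1) one_pos
  have : r - 1 ≠ 0 := by linarith
  have : -r + 1 ≠ 0 := by intro; apply this; linarith
  rw [h2, zero_add, h3, Real.one_rpow]
  field_simp
  ring

lemma wt_tendsto {r : ℝ} (hr : 1 < r) : Tendsto (wt r) atTop (𝓝 0) := by
  have h1 : Tendsto (fun t : ℝ => 1 + |t|) atTop atTop :=
    tendsto_atTop_add_const_left _ _ tendsto_abs_atTop_atTop
  exact (tendsto_rpow_neg_atTop (by linarith : 0 < r)).comp h1

lemma wt_neg (r t : ℝ) : wt r (-t) = wt r t := by simp [wt]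

lemma Lg_le_rpow {e : ℝ} (he : 0 < e) (he1 : e ≤ 1) (t : ℝ) : Lg t ≤ 3 / e * (1 + |t|) ^ e := by
  have h0 : 0 ≤ |t| := abs_nonneg t
  have h1 := Real.log_le_rpow_div (x := |t| + 3) (by positivity) he
  have h2 : (|t| + 3) ^ e ≤ 3 * (1 + |t|) ^ e := by
    calc (|t| + 3) ^ e ≤ (3 * (1 + |t|)) ^ e := by
          apply Real.rpow_le_rpow (by positivity) (by linarith) he.le
      _ = 3 ^ e * (1 + |t|) ^ e := Real.mul_rpow (by norm_num) (by positivity)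
      _ ≤ 3 ^ (1:ℝ) * (1 + |t|) ^ e := by
          gcongr; norm_num
      _ = _ := by norm_num
  unfold Lg
  refine h1.trans ?_
  rw [div_mul_eq_mul_div]
  gcongr

lemma Lg_mul_wt {e r : ℝ} (he : 0 < e) (he1 : e ≤ 1) (t : ℝ) :
    Lg t * wt r t ≤ 3 / e * wt (r - e) t := by
  have h := Lg_le_rpow he he1 t
  calc Lg t * wt r t ≤ (3 / e * (1 + |t|) ^ e) * wt r t := by
        gcongr; exact (wt_pos _ _).le
    _ = 3 / e * wt (r - e) t := by
        unfold wt
        rw [mul_assoc, ← Real.rpow_add (by positivity)]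
        ring_nf

lemma line_integrable {H : ℂ → ℂ} {a r C : ℝ} (hr : 1 < r)
    (hd : ∀ s : ℂ, s.re = a → DifferentiableAt ℂ H s)
    (hC : ∀ s : ℂ, s.re = a → ‖H s‖ ≤ C * wt r s.im) :
    MeasureTheory.Integrable (fun t : ℝ => H (a + t * I)) := by
  refine ((wt_integrable hr).const_mul C).mono' ?_ ?_
  · apply Continuous.aestronglyMeasurable
    rw [continuous_iff_continuousAt]
    intro t
    have := (hd (a + t * I) (by simp)).continuousAt
    exact ContinuousAt.comp (f := fun t : ℝ => (a : ℂ) + t * I) this (by fun_prop)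
  · filter_upwards with t
    have := hC (a + t * I) (by simp)
    simpa using this

lemma shift {H : ℂ → ℂ} {a b r C : ℝ} (hab : a ≤ b) (hr : 1 < r)
    (hd : ∀ s : ℂ, a ≤ s.re → s.re ≤ b → DifferentiableAt ℂ H s)
    (hC : ∀ s : ℂ, a ≤ s.re → s.re ≤ b → ‖H s‖ ≤ C * wt r s.im) :
    ∫ t : ℝ, H (a + t * I) = ∫ t : ℝ, H (b + t * I) := by
  have ia := line_integrable (H := H) (a := a) hr (fun s hs => hd s hs.ge (hs.le.trans hab))
    (fun s hs => hC s hs.ge (hs.le.trans hab))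
  have ib := line_integrable (H := H) (a := b) hr (fun s hs => hd s (hab.trans hs.ge) hs.le)
    (fun s hs => hC s (hab.trans hs.ge) hs.le)
  have ta := MeasureTheory.intervalIntegral_tendsto_integral ia
    (l := atTop) (a := fun T : ℝ => -T) (b := fun T => T) tendsto_neg_atTop_atBot tendsto_id
  have tb := MeasureTheory.intervalIntegral_tendsto_integral ib
    (l := atTop) (a := fun T : ℝ => -T) (b := fun T => T) tendsto_neg_atTop_atBot tendsto_id
  have hrect : ∀ T : ℝ, (∫ y : ℝ in -T..T, H (b + y * I)) - (∫ y : ℝ in -T..T, H (a + y * I)) =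
      I * ((∫ x : ℝ in a..b, H (x + (-T : ℝ) * I)) - (∫ x : ℝ in a..b, H (x + (T : ℝ) * I))) := by
    intro T
    have := integral_boundary_rect_eq_zero_of_differentiableOn H ⟨a, -T⟩ ⟨b, T⟩ (by
      intro s hs
      rw [mem_reProdIm] at hs
      simp only [uIcc_of_le hab] at hs
      exact (hd s hs.1.1 hs.1.2).differentiableWithinAt)
    simp only [smul_eq_mul] at this
    linear_combination (-I) * this + ((∫ y : ℝ in -T..T, H (b + y * I)) - (∫ y : ℝ in -T..T, H (a + y * I))) * I_sq
  have hb0 : Tendsto (fun T : ℝ => (∫ y : ℝ in -T..T, H (b + y * I)) - (∫ y : ℝ in -T..T, H (a + y * I)))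
      atTop (𝓝 0) := by
    have hz : Tendsto (fun T : ℝ => 2 * (C * wt r T * |b - a|)) atTop (𝓝 0) := by
      have := (((wt_tendsto hr).const_mul C).mul_const |b - a|).const_mul 2
      simpa using this
    apply squeeze_zero_norm _ hz
    intro T
    rw [hrect, norm_mul, norm_I, one_mul]
    have hh : ∀ u : ℝ, ‖∫ x : ℝ in a..b, H (x + (u : ℝ) * I)‖ ≤ C * wt r u * |b - a| := by
      intro u
      apply intervalIntegral.norm_integral_le_of_norm_le_const
      intro x hx
      rw [uIoc_of_le hab] at hx
      have := hC (x + u * I) (by simpa using hx.1.le) (by simpa using hx.2)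
      simpa using this
    refine (norm_sub_le _ _).trans ?_
    have h1 := hh (-T)
    have h2 := hh T
    rw [wt_neg] at h1
    linarith
  have := tendsto_nhds_unique hb0 (tb.sub ta)
  exact (sub_eq_zero.mp this.symm).symm

section
variable (RH : ∀ s : ℂ, riemannZeta s = 0 → 0 < s.re → s.re < 1 → s.re = 1 / 2)
set_option linter.unusedSectionVars false
include RH

lemma L1_bound : ∃ C : ℝ, 0 < C ∧ ∀ θ σ : ℝ, 0 < θ → θ ≤ 1 → 1/2 < σ → σ ≤ 3/5 →
    MeasureTheory.Integrable (fun t : ℝ => |(Gz (σ + t * I)).re| * wt (1 + θ) t) ∧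
    ∫ t : ℝ, |(Gz (σ + t * I)).re| * wt (1 + θ) t ≤ C / θ ^ 2 := by
  obtain ⟨C1, hC1, h1⟩ := fz_logDeriv_bound
  obtain ⟨C2, hC2, h2⟩ := Gz_re_lower RH
  refine ⟨100 * C1 + 1000 * C2, by positivity, fun θ σ hθ hθ1 hσ hσ1 => ?_⟩
  obtain ⟨C3, hC3, h3⟩ := Gz_bound RH (η := σ - 1/2) (by linarith) (by linarith)
  set p : ℝ := -((1 + θ) / 2) with hp
  set B : ℂ → ℂ := fun s => 4 - (s - σ)^2 with hB
  set V : ℂ → ℂ := fun s => (B s) ^ (p : ℂ) with hV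
  have hBre : ∀ s : ℂ, σ ≤ s.re → s.re ≤ 3/2 → 3 + s.im^2 ≤ (B s).re := by
    intro s hs hs'
    simp [hB, pow_two]
    nlinarith
  have hVn : ∀ s : ℂ, σ ≤ s.re → s.re ≤ 3/2 → ‖V s‖ ≤ 2 * wt (1 + θ) s.im := by
    intro s hs hs'
    simp only [hV]
    rw [norm_cpow_real]
    have h0 := abs_nonneg s.im
    have hb : (1 + |s.im|)^2 / 2 ≤ ‖B s‖ := by
      refine le_trans ?_ ((hBre s hs hs').trans (re_le_norm _))
      rw [← sq_abs s.im]; nlinarith [sq_nonneg (|s.im| - 1)]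
    calc ‖B s‖ ^ p ≤ ((1 + |s.im|)^2 / 2) ^ p :=
          Real.rpow_le_rpow_of_nonpos (by positivity) hb (by rw [hp]; linarith)
      _ = (1/2) ^ p * (1 + |s.im|) ^ (2 * p) := by
          rw [div_eq_mul_one_div, mul_comm, Real.mul_rpow (by norm_num) (by positivity),
            Real.rpow_mul (by positivity), Real.rpow_two]
      _ ≤ 2 * wt (1 + θ) s.im := by
          unfold wt
          have : 2 * p = -(1 + θ) := by rw [hp]; ring
          rw [this]
          gcongr
          rw [one_div, Real.inv_rpow (by norm_num), ← Real.rpow_neg (by norm_num)]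
          calc (2:ℝ) ^ (-p) ≤ 2 ^ (1:ℝ) :=
                Real.rpow_le_rpow_of_exponent_le (by norm_num) (by rw [hp]; linarith)
            _ = 2 := by norm_num
  have hVd : ∀ s : ℂ, σ ≤ s.re → s.re ≤ 3/2 → DifferentiableAt ℂ V s := by
    intro s hs hs'
    have hB0 : DifferentiableAt ℂ B s := by simp only [hB]; fun_prop
    apply hB0.cpow_const
    left
    have := hBre s hs hs'
    nlinarith [sq_nonneg s.im]
  have hHd : ∀ s : ℂ, σ ≤ s.re → s.re ≤ 3/2 → DifferentiableAt ℂ (fun s => Gz s * V s) s := by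
    intro s hs hs'
    exact (Gz_differentiableAt RH (by linarith)).mul (hVd s hs hs')
  have hHn : ∀ s : ℂ, σ ≤ s.re → s.re ≤ 3/2 →
      ‖Gz s * V s‖ ≤ (C3 * 2 * (3 / (θ/2))) * wt (1 + θ/2) s.im := by
    intro s hs hs'
    rw [norm_mul]
    have e1 := (h3 s (by linarith) (by linarith)).1
    have e2 := hVn s hs hs'
    have e3 := Lg_mul_wt (e := θ/2) (r := 1 + θ) (by positivity) (by linarith) s.im
    have e4 : 1 + θ - θ/2 = 1 + θ/2 := by ring
    rw [e4] at e3
    calc ‖Gz s‖ * ‖V s‖ ≤ (C3 * Lg s.im) * (2 * wt (1 + θ) s.im) := by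
          gcongr
          exact mul_nonneg hC3.le (Lg_pos _).le
      _ = C3 * 2 * (Lg s.im * wt (1 + θ) s.im) := by ring
      _ ≤ C3 * 2 * (3 / (θ/2) * wt (1 + θ/2) s.im) := by gcongr
      _ = _ := by ring
  have hr2 : 1 < 1 + θ/2 := by linarith
  have hs := shift (H := fun s => Gz s * V s) (a := σ) (b := 3/2) (by linarith) hr2 hHd hHn
  have hi := line_integrable (H := fun s => Gz s * V s) (a := σ) hr2
    (fun s hs => hHd s hs.ge (by linarith)) (fun s hs => hHn s hs.ge (by linarith))
  have hright : ‖∫ t : ℝ, Gz (((3/2:ℝ) : ℂ) + t * I) * V (((3/2:ℝ):ℂ) + t * I)‖ ≤ 2 * C1 * (2 / θ) := by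
    have : (2 / θ) = ∫ t, wt (1 + θ) t := by rw [wt_integral (by linarith)]; ring_nf
    rw [this, ← MeasureTheory.integral_const_mul]
    apply MeasureTheory.norm_integral_le_of_norm_le ((wt_integrable (by linarith)).const_mul _)
    filter_upwards with t
    rw [norm_mul]
    have e1 := h1 (((3/2:ℝ):ℂ) + t * I) (by simp)
    have e2 := hVn (((3/2:ℝ):ℂ) + t * I) (by simp; linarith) (by simp)
    simp only [add_im, ofReal_im, mul_im, ofReal_re, I_im, mul_one, I_re, mul_zero, add_zero, zero_add] at e2
    calc _ ≤ C1 * (2 * wt (1 + θ) t) := by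
          apply mul_le_mul e1 e2 (norm_nonneg _) hC1.le
      _ = _ := by ring
  -- on the left line the weight is real
  set v : ℝ → ℝ := fun t => (4 + t^2) ^ p with hv
  have hVv : ∀ t : ℝ, V (σ + t * I) = (v t : ℂ) := by
    intro t
    simp only [hV, hv, hB]
    rw [ofReal_cpow (by positivity)]
    congr 1
    push_cast
    ring_nf
    rw [I_sq]; ring
  have hvlow : ∀ t, wt (1 + θ) t ≤ 4 * v t := by
    intro t
    have h0 := abs_nonneg t
    simp only [hv]
    have : (4 * (1 + |t|)^2) ^ p ≤ (4 + t^2) ^ p := by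
      apply Real.rpow_le_rpow_of_nonpos (by positivity) _ (by rw [hp]; linarith)
      rw [← sq_abs t]; nlinarith
    have h4 : (4 * (1 + |t|)^2) ^ p = 4 ^ p * wt (1 + θ) t := by
      rw [Real.mul_rpow (by norm_num) (by positivity), ← Real.rpow_two,
        ← Real.rpow_mul (by positivity), wt]
      congr 2
      rw [hp]; ring
    have h5 : (4:ℝ) ^ (-1:ℝ) ≤ 4 ^ p :=
      Real.rpow_le_rpow_of_exponent_le (by norm_num) (by rw [hp]; linarith)
    rw [Real.rpow_neg_one] at h5
    rw [h4] at this
    nlinarith [wt_pos (1 + θ) t]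
  have hvup : ∀ t, v t ≤ 2 * wt (1 + θ) t := by
    intro t
    have := hVn (σ + t * I) (by simp) (by simp; linarith)
    rw [hVv] at this
    simp only [norm_real, Real.norm_eq_abs] at this
    simpa using (le_abs_self _).trans this
  have hv0 : ∀ t, 0 ≤ v t := fun t => by simp only [hv]; positivity
  have hre : ∀ t : ℝ, (Gz (σ + t * I) * V (σ + t * I)).re = (Gz (σ + t * I)).re * v t := by
    intro t; rw [hVv, re_mul_ofReal]
  have hire : MeasureTheory.Integrable (fun t : ℝ => (Gz (σ + t * I)).re * v t) := by
    have := hi.re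
    refine this.congr ?_
    filter_upwards with t
    exact hre t
  have hIre : ∫ t : ℝ, (Gz (σ + t * I)).re * v t ≤ 2 * C1 * (2 / θ) := by
    have e1 : ∫ t : ℝ, (Gz (σ + t * I)).re * v t = (∫ t : ℝ, Gz (σ + t * I) * V (σ + t * I)).re := by
      have := integral_re hi
      simp only [RCLike.re_eq_complex_re] at this
      rw [← this]
      congr 1; ext t; exact (hre t).symm
    rw [e1, hs]
    exact (re_le_norm _).trans hright
  -- pointwise majorant
  have hmaj : ∀ t : ℝ, |(Gz (σ + t * I)).re| * wt (1 + θ) t ≤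
      4 * ((Gz (σ + t * I)).re * v t) + 96 * C2 / θ * wt (1 + θ/2) t := by
    intro t
    have e1 := h2 (σ + t * I) (by simpa using hσ) (by simp; linarith)
    have eim : ((σ : ℂ) + t * I).im = t := by simp
    rw [eim] at e1
    set g := (Gz (σ + t * I)).re
    have e3 := Lg_mul_wt (e := θ/2) (r := 1 + θ) (by positivity) (by linarith) t
    have e4 : 1 + θ - θ/2 = 1 + θ/2 := by ring
    rw [e4] at e3
    have hL := Lg_pos t
    have habs : |g| ≤ g + 2 * (C2 * Lg t) := by
      rcases abs_cases g with ⟨h, _⟩ | ⟨h, _⟩ <;> rw [h]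
      · have := mul_pos hC2 hL; linarith
      · linarith
    calc |g| * wt (1 + θ) t ≤ |g| * (4 * v t) := by gcongr; exact hvlow t
      _ ≤ (g + 2 * (C2 * Lg t)) * (4 * v t) := by
          have := hv0 t
          gcongr
      _ = 4 * (g * v t) + 8 * C2 * Lg t * v t := by ring
      _ ≤ 4 * (g * v t) + 8 * C2 * Lg t * (2 * wt (1 + θ) t) := by gcongr; exact hvup t
      _ = 4 * (g * v t) + 16 * C2 * (Lg t * wt (1 + θ) t) := by ring
      _ ≤ 4 * (g * v t) + 16 * C2 * (3 / (θ/2) * wt (1 + θ/2) t) := by gcongr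
      _ = _ := by field_simp; ring
  have himaj : MeasureTheory.Integrable (fun t : ℝ =>
      4 * ((Gz (σ + t * I)).re * v t) + 96 * C2 / θ * wt (1 + θ/2) t) :=
    (hire.const_mul 4).add ((wt_integrable hr2).const_mul _)
  have hint : MeasureTheory.Integrable (fun t : ℝ => |(Gz (σ + t * I)).re| * wt (1 + θ) t) := by
    refine himaj.mono' ?_ ?_
    · apply Continuous.aestronglyMeasurable
      have hc : Continuous (fun t : ℝ => Gz (σ + t * I)) := by
        rw [continuous_iff_continuousAt]
        intro t
        have := (Gz_differentiableAt RH (s := σ + t * I) (by simpa using hσ)).continuousAt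
        exact ContinuousAt.comp (f := fun t : ℝ => (σ : ℂ) + t * I) this (by fun_prop)
      apply ((continuous_re.comp hc).abs).mul
      unfold wt
      apply Continuous.rpow_const (by fun_prop)
      intro t; left; positivity
    · filter_upwards with t
      rw [Real.norm_of_nonneg (mul_nonneg (abs_nonneg _) (wt_pos _ _).le)]
      exact hmaj t
  refine ⟨hint, (MeasureTheory.integral_mono hint himaj hmaj).trans ?_⟩
  rw [MeasureTheory.integral_add (hire.const_mul 4) ((wt_integrable hr2).const_mul _),
    MeasureTheory.integral_const_mul, MeasureTheory.integral_const_mul, wt_integral hr2]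
  calc _ ≤ 4 * (2 * C1 * (2 / θ)) + 96 * C2 / θ * (2 / (1 + θ/2 - 1)) := by gcongr
    _ = 16 * C1 * θ / θ^2 + 384 * C2 / θ^2 := by
        have : 1 + θ/2 - 1 = θ/2 := by ring
        rw [this]; field_simp; ring
    _ ≤ 16 * C1 * 1 / θ^2 + 384 * C2 / θ^2 := by gcongr
    _ = (16 * C1 + 384 * C2) / θ^2 := by ring
    _ ≤ _ := by gcongr <;> norm_num

end

noncomputable def Kp (X : ℝ) (s : ℂ) : ℂ := (X : ℂ) ^ (s + 1) / (s * (s + 1))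

noncomputable def Kx (x : ℝ) (s : ℂ) : ℂ := (Kp (x + Real.sqrt x) s - Kp x s) / (Real.sqrt x : ℂ)

lemma Kp_diff {X : ℝ} (hX : 0 < X) {s : ℂ} (hs : 0 < s.re) : DifferentiableAt ℂ (Kp X) s := by
  unfold Kp
  have h0 : s ≠ 0 := by rintro rfl; simp at hs
  have h1 : s + 1 ≠ 0 := by
    intro h
    have := congrArg re h
    simp at this; linarith
  refine DifferentiableAt.div ?_ (by fun_prop) (mul_ne_zero h0 h1)
  exact DifferentiableAt.const_cpow (by fun_prop) (Or.inl (by exact_mod_cast hX.ne'))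

lemma Kx_diff {x : ℝ} (hx : 0 < x) {s : ℂ} (hs : 0 < s.re) : DifferentiableAt ℂ (Kx x) s := by
  unfold Kx
  exact ((Kp_diff (by positivity) hs).sub (Kp_diff hx hs)).div_const _

lemma Kp_conj {X : ℝ} (hX : 0 < X) (s : ℂ) : Kp X ((starRingEnd ℂ) s) = (starRingEnd ℂ) (Kp X s) := by
  unfold Kp
  have harg : (X : ℂ).arg ≠ Real.pi := by
    rw [arg_ofReal_of_nonneg hX.le]; exact Real.pi_pos.ne
  have h := cpow_conj (X : ℂ) (s + 1) harg
  simp only [map_div₀, map_mul, map_add, map_one, conj_ofReal] at h ⊢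
  rw [h]

lemma Kx_conj {x : ℝ} (hx : 0 < x) (s : ℂ) : Kx x ((starRingEnd ℂ) s) = (starRingEnd ℂ) (Kx x s) := by
  unfold Kx
  rw [Kp_conj hx, Kp_conj (by positivity)]
  simp

lemma norm_lower {d : ℝ} (hd : 0 < d) (hd1 : d ≤ 1) {s : ℂ} (hs : d ≤ s.re) :
    d / 2 * (1 + |s.im|) ≤ ‖s‖ := by
  have h1 := (le_abs_self _).trans (abs_re_le_norm s)
  have h2 := abs_im_le_norm s
  have h3 := abs_nonneg s.im
  nlinarith

lemma wt_two (t : ℝ) : wt 2 t = 1 / (1 + |t|)^2 := by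
  unfold wt
  rw [Real.rpow_neg (by positivity), Real.rpow_two, one_div]

lemma wt_one (t : ℝ) : wt 1 t = 1 / (1 + |t|) := by
  unfold wt
  rw [Real.rpow_neg_one, one_div]

lemma Kp_bound {X d : ℝ} (hX : 0 < X) (hd : 0 < d) (hd1 : d ≤ 1) {s : ℂ} (hs : d ≤ s.re) :
    ‖Kp X s‖ ≤ 4 / d * X ^ (s.re + 1) * wt 2 s.im := by
  unfold Kp
  rw [norm_div, norm_mul, norm_cpow_eq_rpow_re_of_pos hX, wt_two]
  have h1 := norm_lower hd hd1 hs
  have h2 := norm_lower one_pos le_rfl (s := s + 1) (by simp; linarith)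
  simp only [add_im, one_im, add_zero, add_re, one_re] at h2 ⊢
  have h3 := abs_nonneg s.im
  have h4 : d / 4 * (1 + |s.im|)^2 ≤ ‖s‖ * ‖s + 1‖ := by
    calc d / 4 * (1 + |s.im|)^2 = (d / 2 * (1 + |s.im|)) * (1 / 2 * (1 + |s.im|)) := by ring
      _ ≤ _ := by gcongr
  calc X ^ (s.re + 1) / (‖s‖ * ‖s + 1‖) ≤ X ^ (s.re + 1) / (d / 4 * (1 + |s.im|)^2) := by gcongr
    _ = _ := by field_simp

lemma sqrt_le_self' {x : ℝ} (hx : 1 ≤ x) : Real.sqrt x ≤ x := by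
  rw [Real.sqrt_le_left (by linarith)]; nlinarith

lemma Kx_bound1 {x d : ℝ} (hx : 1 ≤ x) (hd : 0 < d) (hd1 : d ≤ 1) {s : ℂ} (hs : d ≤ s.re) :
    ‖Kx x s‖ ≤ 8 / d * (2 * x) ^ (s.re + 1) / Real.sqrt x * wt 2 s.im := by
  have hsq : 0 < Real.sqrt x := Real.sqrt_pos.2 (by linarith)
  have hsx := sqrt_le_self' hx
  have hw := wt_pos 2 s.im
  have e1 := Kp_bound (X := x + Real.sqrt x) (by positivity) hd hd1 hs
  have e2 := Kp_bound (X := x) (by linarith) hd hd1 hs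
  have e3 : (x + Real.sqrt x) ^ (s.re + 1) ≤ (2 * x) ^ (s.re + 1) :=
    Real.rpow_le_rpow (by positivity) (by linarith) (by linarith)
  have e4 : x ^ (s.re + 1) ≤ (2 * x) ^ (s.re + 1) :=
    Real.rpow_le_rpow (by positivity) (by linarith) (by linarith)
  unfold Kx
  rw [norm_div, norm_real, Real.norm_of_nonneg hsq.le]
  have : ‖Kp (x + Real.sqrt x) s - Kp x s‖ ≤ 8 / d * (2 * x) ^ (s.re + 1) * wt 2 s.im := by
    refine (norm_sub_le _ _).trans ?_
    calc _ ≤ 4 / d * (2 * x) ^ (s.re + 1) * wt 2 s.im + 4 / d * (2 * x) ^ (s.re + 1) * wt 2 s.im := by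
          refine add_le_add (e1.trans ?_) (e2.trans ?_) <;> gcongr
      _ = _ := by ring
  calc _ ≤ (8 / d * (2 * x) ^ (s.re + 1) * wt 2 s.im) / Real.sqrt x := by gcongr
    _ = _ := by ring

lemma Kx_bound2 {x : ℝ} (hx : 1 ≤ x) {s : ℂ} (hs : 1/2 ≤ s.re) :
    ‖Kx x s‖ ≤ 4 * (2 * x) ^ s.re * wt 1 s.im := by
  have hsq : 0 < Real.sqrt x := Real.sqrt_pos.2 (by linarith)
  have hsx := sqrt_le_self' hx
  have hs1 : s ≠ -1 := by rintro rfl; norm_num at hs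
  have hs1' : s + 1 ≠ 0 := fun h => hs1 (by linear_combination h)
  have hs0 : s ≠ 0 := by rintro rfl; norm_num at hs
  have hmv := norm_image_sub_le_of_norm_deriv_le_segment' (a := x) (b := x + Real.sqrt x)
    (f := fun y : ℝ => (y : ℂ) ^ (s + 1) / (s + 1)) (f' := fun y : ℝ => (y : ℂ) ^ s)
    (C := (2 * x) ^ s.re)
    (fun y hy => (hasDerivAt_ofReal_cpow_const' (by linarith [hy.1]) hs1).hasDerivWithinAt)
    (fun y hy => by
      rw [norm_cpow_eq_rpow_re_of_pos (by linarith [hy.1])]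
      exact Real.rpow_le_rpow (by linarith [hy.1]) (by linarith [hy.2]) (by linarith))
    (x + Real.sqrt x) (by constructor <;> linarith)
  have e : Kx x s = (((x + Real.sqrt x : ℝ) : ℂ) ^ (s + 1) / (s + 1) - (x : ℂ) ^ (s + 1) / (s + 1))
      / (s * (Real.sqrt x : ℂ)) := by
    unfold Kx Kp
    have : (Real.sqrt x : ℂ) ≠ 0 := by exact_mod_cast hsq.ne'
    field_simp
  rw [e, norm_div, norm_mul, norm_real, Real.norm_of_nonneg hsq.le, wt_one]
  have h1 := norm_lower (d := 1/2) (by norm_num) (by norm_num) hs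
  have h3 := abs_nonneg s.im
  calc _ ≤ (2 * x) ^ s.re * (x + Real.sqrt x - x) / ((1/2) / 2 * (1 + |s.im|) * Real.sqrt x) := by
          have : 0 ≤ (2 * x) ^ s.re * (x + Real.sqrt x - x) := (norm_nonneg _).trans hmv
          gcongr
    _ = _ := by field_simp; ring

lemma Kx_interp {x θ : ℝ} (hx : 1 ≤ x) (hθ : 0 < θ) (hθ1 : θ ≤ 1) {s : ℂ} (hs : 1/2 ≤ s.re) :
    ‖Kx x s‖ ≤ 32 * (2 * x) ^ s.re * (Real.sqrt x) ^ θ * wt (1 + θ) s.im := by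
  have hsq : 0 < Real.sqrt x := Real.sqrt_pos.2 (by linarith)
  have h3 := abs_nonneg s.im
  have hY : 0 < (2 * x) ^ s.re := Real.rpow_pos_of_pos (by linarith) _
  have b1 := Kx_bound1 hx (d := 1/2) (by norm_num) (by norm_num) hs
  have b2 := Kx_bound2 hx hs
  set q := Real.sqrt x / (1 + |s.im|) with hq
  have hq0 : 0 < q := by positivity
  have b1' : ‖Kx x s‖ ≤ 32 * (2 * x) ^ s.re * wt 1 s.im * q := by
    refine b1.trans (le_of_eq ?_)
    rw [wt_two, wt_one, hq, Real.rpow_add (by linarith), Real.rpow_one]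
    field_simp
    rw [Real.sq_sqrt (by linarith)]; ring
  have b2' : ‖Kx x s‖ ≤ 32 * (2 * x) ^ s.re * wt 1 s.im * 1 := by
    refine b2.trans ?_
    rw [mul_one]
    have := wt_pos 1 s.im
    gcongr; norm_num
  have hmin : ‖Kx x s‖ ≤ 32 * (2 * x) ^ s.re * wt 1 s.im * q ^ θ := by
    have hw := wt_pos 1 s.im
    rcases le_total 1 q with h | h
    · refine b2'.trans ?_
      gcongr
      exact Real.one_le_rpow h hθ.le
    · refine b1'.trans ?_
      gcongr
      calc q = q ^ (1:ℝ) := (Real.rpow_one q).symm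
        _ ≤ q ^ θ := Real.rpow_le_rpow_of_exponent_ge hq0 h hθ1
  refine hmin.trans (le_of_eq ?_)
  have : wt (1 + θ) s.im = wt 1 s.im * (1 + |s.im|) ^ (-θ) := by
    unfold wt
    rw [← Real.rpow_add (by positivity)]; ring_nf
  rw [this, hq, Real.div_rpow hsq.le (by positivity), Real.rpow_neg (by positivity)]
  ring

lemma rpow_inv_log {x : ℝ} (hx : 1 < x) (c : ℝ) : x ^ (c * (1 / Real.log x)) = Real.exp c := by
  rw [Real.rpow_def_of_pos (by linarith)]
  have := Real.log_pos hx
  congr 1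
  field_simp

lemma Lg_wt2 (t : ℝ) : Lg t * wt 2 t ≤ 6 * wt (3/2) t := by
  have := Lg_mul_wt (e := 1/2) (r := 2) (by norm_num) (by norm_num) t
  norm_num at this
  exact this

section
variable (RH : ∀ s : ℂ, riemannZeta s = 0 → 0 < s.re → s.re < 1 → s.re = 1 / 2)
set_option linter.unusedSectionVars false
include RH

lemma main_int : ∃ C : ℝ, 0 < C ∧ ∀ x : ℝ, Real.exp 10 ≤ x →
    ‖∫ t : ℝ, Gz (((2:ℝ):ℂ) + t * I) * Kx x (((2:ℝ):ℂ) + t * I)‖ ≤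
      C * Real.sqrt x * (Real.log x)^2 := by
  obtain ⟨C1, hC1, h1⟩ := L1_bound RH
  obtain ⟨C2, hC2, h2⟩ := Gz_bound RH (η := 1/2) (by norm_num) (by norm_num)
  refine ⟨2 * (576 * C1) + 14400 * C2, by positivity, fun x hx => ?_⟩
  have hx1 : 1 < x := lt_of_lt_of_le (by rw [← Real.exp_zero]; exact Real.exp_lt_exp.2 (by norm_num)) hx
  have hx0 : 0 < x := by linarith
  have hlog : 10 ≤ Real.log x := by rwa [Real.le_log_iff_exp_le hx0]
  have hsq : 0 < Real.sqrt x := Real.sqrt_pos.2 hx0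
  set δ := 1 / Real.log x with hδ
  have hδ0 : 0 < δ := by positivity
  have hδ1 : δ ≤ 1/10 := by
    rw [hδ]; exact one_div_le_one_div_of_le (by norm_num) hlog
  have hδinv : 1 / δ = Real.log x := by rw [hδ, one_div_one_div]
  have he1 : Real.exp 1 ≤ 3 := by linarith [Real.exp_one_lt_d9]
  set σ := 1/2 + δ with hσ
  have hY : (2 * x) ^ σ ≤ 6 * Real.sqrt x := by
    rw [Real.mul_rpow (by norm_num) hx0.le, hσ, Real.rpow_add hx0, ← Real.sqrt_eq_rpow]
    have e1 : x ^ δ = Real.exp 1 := by rw [hδ, ← one_mul (1 / Real.log x)]; exact rpow_inv_log hx1 1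
    have e2 : (2:ℝ) ^ (1/2 + δ) ≤ 2 ^ (1:ℝ) :=
      Real.rpow_le_rpow_of_exponent_le (by norm_num) (by linarith)
    rw [Real.rpow_one] at e2
    rw [e1]
    calc (2:ℝ) ^ (1/2 + δ) * (Real.sqrt x * Real.exp 1) ≤ 2 * (Real.sqrt x * 3) := by gcongr
      _ = _ := by ring
  have hsd : (Real.sqrt x) ^ δ ≤ 3 := by
    rw [Real.sqrt_eq_rpow, ← Real.rpow_mul hx0.le, hδ, rpow_inv_log hx1]
    exact (Real.exp_le_exp.2 (by norm_num)).trans he1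
  obtain ⟨C3, hC3, h3⟩ := Gz_bound RH (η := δ) hδ0 (by linarith)
  -- bounds on strips
  have hKs : ∀ s : ℂ, δ ≤ s.re → s.re ≤ 2 → ‖Kx x s‖ ≤ (8 / δ * (2 * x)^(3:ℝ) / Real.sqrt x) * wt 2 s.im := by
    intro s hs hs'
    refine (Kx_bound1 hx1.le hδ0 (by linarith) hs).trans ?_
    have := wt_pos 2 s.im
    gcongr
    · linarith
    · linarith
  set M := 8 / δ * (2 * x)^(3:ℝ) / Real.sqrt x with hM
  have hM0 : 0 ≤ M := by positivity
  -- first shift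
  have hd1 : ∀ s : ℂ, σ ≤ s.re → s.re ≤ 2 → DifferentiableAt ℂ (fun s => Gz s * Kx x s) s :=
    fun s hs _ => (Gz_differentiableAt RH (by linarith)).mul (Kx_diff hx0 (by linarith))
  have hb1 : ∀ s : ℂ, σ ≤ s.re → s.re ≤ 2 → ‖Gz s * Kx x s‖ ≤ (C3 * M * 6) * wt (3/2) s.im := by
    intro s hs hs'
    rw [norm_mul]
    have e1 := (h3 s hs hs').1
    have e2 := hKs s (by linarith) hs'
    have := Lg_pos s.im
    calc ‖Gz s‖ * ‖Kx x s‖ ≤ (C3 * Lg s.im) * (M * wt 2 s.im) := by gcongr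
      _ = C3 * M * (Lg s.im * wt 2 s.im) := by ring
      _ ≤ C3 * M * (6 * wt (3/2) s.im) := mul_le_mul_of_nonneg_left (Lg_wt2 _) (by positivity)
      _ = _ := by ring
  have hsh1 := shift (H := fun s => Gz s * Kx x s) (a := σ) (b := 2) (by linarith) (by norm_num) hd1 hb1
  have hi1 := line_integrable (H := fun s => Gz s * Kx x s) (a := σ) (by norm_num)
    (fun s hs => hd1 s hs.ge (by linarith)) (fun s hs => hb1 s hs.ge (by linarith))
  -- second shift
  have hd2 : ∀ s : ℂ, σ ≤ s.re → s.re ≤ 1 → DifferentiableAt ℂ (fun s => Gz s * Kx x (2 * σ - s)) s := by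
    intro s hs hs'
    refine (Gz_differentiableAt RH (by linarith)).mul ?_
    have : DifferentiableAt ℂ (Kx x) (2 * σ - s) := Kx_diff hx0 (by simp; linarith)
    exact DifferentiableAt.comp (g := Kx x) (f := fun s : ℂ => 2 * (σ:ℂ) - s) s this (by fun_prop)
  have hb2 : ∀ s : ℂ, σ ≤ s.re → s.re ≤ 1 → ‖Gz s * Kx x (2 * σ - s)‖ ≤ (C3 * M * 6) * wt (3/2) s.im := by
    intro s hs hs'
    rw [norm_mul]
    have e1 := (h3 s hs (by linarith)).1
    have e2 := hKs (2 * σ - s) (by simp; linarith) (by simp; linarith)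
    have e3 : (2 * (σ:ℂ) - s).im = - s.im := by simp
    rw [e3, wt_neg] at e2
    have := Lg_pos s.im
    calc ‖Gz s‖ * ‖Kx x (2 * σ - s)‖ ≤ (C3 * Lg s.im) * (M * wt 2 s.im) := by gcongr
      _ = C3 * M * (Lg s.im * wt 2 s.im) := by ring
      _ ≤ C3 * M * (6 * wt (3/2) s.im) := mul_le_mul_of_nonneg_left (Lg_wt2 _) (by positivity)
      _ = _ := by ring
  have hsh2 := shift (H := fun s => Gz s * Kx x (2 * σ - s)) (a := σ) (b := 1) (by linarith) (by norm_num) hd2 hb2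
  have hi2 := line_integrable (H := fun s => Gz s * Kx x (2 * σ - s)) (a := σ) (by norm_num)
    (fun s hs => hd2 s hs.ge (by linarith)) (fun s hs => hb2 s hs.ge (by linarith))
  have hJ : ‖∫ t : ℝ, Gz (((1:ℝ):ℂ) + t * I) * Kx x (2 * σ - (((1:ℝ):ℂ) + t * I))‖ ≤
      14400 * C2 * Real.sqrt x * Real.log x := by
    have : 14400 * C2 * Real.sqrt x * Real.log x =
        ∫ t, (3600 * C2 * Real.sqrt x * Real.log x) * wt (3/2) t := by
      rw [MeasureTheory.integral_const_mul, wt_integral (by norm_num)]; ring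
    rw [this]
    apply MeasureTheory.norm_integral_le_of_norm_le ((wt_integrable (by norm_num)).const_mul _)
    filter_upwards with t
    have e1 := (h2 (((1:ℝ):ℂ) + t * I) (by simp; norm_num) (by simp)).1
    have e2 := Kx_bound1 hx1.le (d := 2 * δ) (by linarith) (by linarith)
      (s := 2 * σ - (((1:ℝ):ℂ) + t * I)) (by simp; linarith)
    have e3 : (2 * (σ:ℂ) - (((1:ℝ):ℂ) + t * I)).im = - t := by simp
    have e4 : (2 * (σ:ℂ) - (((1:ℝ):ℂ) + t * I)).re = 2 * δ := by simp [hσ]; ring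
    have e5 : (((1:ℝ):ℂ) + t * I).im = t := by simp
    rw [e3, e4, wt_neg] at e2
    rw [e5] at e1
    have e6 : (2 * x) ^ (2 * δ + 1) ≤ 36 * x := by
      rw [Real.rpow_add (by linarith), Real.rpow_one, Real.mul_rpow (by norm_num) hx0.le, hδ,
        rpow_inv_log hx1]
      have e7 : Real.exp 2 ≤ 9 := by
        have : Real.exp 2 = Real.exp 1 * Real.exp 1 := by rw [← Real.exp_add]; norm_num
        rw [this]; nlinarith [Real.exp_pos 1]
      have e8 : (2:ℝ) ^ (2 * (1 / Real.log x)) ≤ 2 ^ (1:ℝ) :=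
        Real.rpow_le_rpow_of_exponent_le (by norm_num) (by rw [← hδ]; linarith)
      rw [Real.rpow_one] at e8
      calc _ ≤ 2 * 9 * (2 * x) := by gcongr
        _ = _ := by ring
    have hL := Lg_pos t
    have hw := wt_pos 2 t
    rw [norm_mul]
    calc _ ≤ (C2 * Lg t) * (8 / (2 * δ) * (36 * x) / Real.sqrt x * wt 2 t) := by
          apply mul_le_mul e1 (e2.trans _) (norm_nonneg _) (by positivity)
          gcongr
      _ = 144 * C2 * (x / Real.sqrt x) * (1 / δ) * (Lg t * wt 2 t) := by field_simp; ring
      _ = 144 * C2 * Real.sqrt x * Real.log x * (Lg t * wt 2 t) := by rw [Real.div_sqrt, hδinv]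
      _ ≤ 144 * C2 * Real.sqrt x * Real.log x * (6 * wt (3/2) t) := mul_le_mul_of_nonneg_left (Lg_wt2 _) (by positivity)
      _ = 864 * C2 * Real.sqrt x * Real.log x * wt (3/2) t := by ring
      _ ≤ _ := by
          have := wt_pos (3/2) t
          gcongr; norm_num
  rw [← hsh2] at hJ
  have hconj : ∀ t : ℝ, Gz (σ + t * I) * Kx x (σ + t * I) +
      (starRingEnd ℂ) (Gz (σ + t * I) * Kx x (2 * σ - (σ + t * I))) =
      2 * ((Gz (σ + t * I)).re : ℂ) * Kx x (σ + t * I) := by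
    intro t
    have e : (2 * (σ:ℂ) - (σ + t * I)) = (starRingEnd ℂ) (σ + t * I) := by
      simp; ring
    rw [e, Kx_conj hx0, map_mul, conj_conj, ← add_mul, add_conj]
    push_cast; ring
  have hcj : ∫ t : ℝ, (starRingEnd ℂ) (Gz (σ + t * I) * Kx x (2 * σ - (σ + t * I))) =
      (starRingEnd ℂ) (∫ t : ℝ, Gz (σ + t * I) * Kx x (2 * σ - (σ + t * I))) := integral_conj
  have hi2' : MeasureTheory.Integrable (fun t : ℝ =>
      (starRingEnd ℂ) (Gz (σ + t * I) * Kx x (2 * σ - (σ + t * I)))) :=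
    (conjLIE.toContinuousLinearEquiv.integrable_comp_iff).2 hi2
  have hsum := MeasureTheory.integral_add hi1 hi2'
  simp only [hconj] at hsum
  rw [hcj] at hsum
  obtain ⟨hLi, hLb⟩ := h1 δ σ hδ0 (by linarith) (by linarith) (by linarith)
  have hmain : ‖∫ t : ℝ, 2 * ((Gz (σ + t * I)).re : ℂ) * Kx x (σ + t * I)‖ ≤
      2 * (576 * C1) * Real.sqrt x * (Real.log x)^2 := by
    have : ‖∫ t : ℝ, 2 * ((Gz (σ + t * I)).re : ℂ) * Kx x (σ + t * I)‖ ≤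
        ∫ t : ℝ, (2 * (576 * Real.sqrt x)) * (|(Gz (σ + t * I)).re| * wt (1 + δ) t) := by
      apply MeasureTheory.norm_integral_le_of_norm_le (hLi.const_mul _)
      filter_upwards with t
      have e := Kx_interp hx1.le hδ0 (by linarith) (s := σ + t * I) (by simp; linarith)
      have e3 : ((σ:ℂ) + t * I).im = t := by simp
      have e4 : ((σ:ℂ) + t * I).re = σ := by simp
      rw [e3, e4] at e
      rw [norm_mul, norm_mul, norm_real, Real.norm_eq_abs]
      have hw := wt_pos (1 + δ) t
      have : ‖(2:ℂ)‖ = 2 := by norm_num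
      rw [this]
      calc _ ≤ 2 * |(Gz (σ + t * I)).re| * (32 * (6 * Real.sqrt x) * 3 * wt (1 + δ) t) := by
            refine mul_le_mul_of_nonneg_left (e.trans ?_) (by positivity)
            gcongr
        _ = _ := by ring
    refine this.trans ?_
    rw [MeasureTheory.integral_const_mul]
    calc _ ≤ 2 * (576 * Real.sqrt x) * (C1 / δ^2) := by gcongr
      _ = 2 * (576 * Real.sqrt x) * (C1 * (1/δ)^2) := by congr 1; field_simp
      _ = _ := by rw [hδinv]; ring
  rw [← hsh1]
  have hfin : ∫ t : ℝ, Gz (σ + t * I) * Kx x (σ + t * I) =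
      (∫ t : ℝ, 2 * ((Gz (σ + t * I)).re : ℂ) * Kx x (σ + t * I)) -
      (starRingEnd ℂ) (∫ t : ℝ, Gz (σ + t * I) * Kx x (2 * σ - (σ + t * I))) := by
    rw [hsum]; ring
  show ‖∫ t : ℝ, Gz (σ + t * I) * Kx x (σ + t * I)‖ ≤ _
  rw [hfin]
  refine (norm_sub_le _ _).trans ?_
  rw [norm_conj]
  refine (add_le_add hmain hJ).trans ?_
  have : 14400 * C2 * Real.sqrt x * Real.log x ≤ 14400 * C2 * Real.sqrt x * (Real.log x)^2 := by
    gcongr; nlinarith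
  linarith

end

lemma Kp_line_integrable {X : ℝ} (hX : 0 < X) :
    MeasureTheory.Integrable (fun t : ℝ => Kp X (((2:ℝ):ℂ) + t * I)) := by
  refine line_integrable (H := Kp X) (a := 2) (r := 2) (C := 4 / 1 * X ^ ((2:ℝ) + 1)) (by norm_num)
    (fun s hs => Kp_diff hX (by linarith)) (fun s hs => ?_)
  have := Kp_bound hX one_pos le_rfl (s := s) (by linarith)
  rwa [hs] at this

lemma Kp_eq {X : ℝ} (hX : 0 < X) (s : ℂ) :
    Kp X s = X * (((X⁻¹ : ℝ) : ℂ) ^ (-s) * (1 / (s * (s + 1)))) := by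
  have harg : (X : ℂ).arg ≠ Real.pi := by
    rw [arg_ofReal_of_nonneg hX.le]; exact Real.pi_pos.ne
  have hX' : (X : ℂ) ≠ 0 := by exact_mod_cast hX.ne'
  rw [Kp, ofReal_inv, inv_cpow _ _ harg, cpow_neg, inv_inv, cpow_add _ _ hX', cpow_one]
  ring

lemma s_ne {s : ℂ} (hs : 1 < s.re) : s ≠ 0 ∧ s + 1 ≠ 0 ∧ s - 1 ≠ 0 ∧ s + (-1) ≠ 0 := by
  refine ⟨?_, ?_, ?_, ?_⟩ <;> intro h <;> have := congrArg re h <;> simp at this <;> linarith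

lemma perronA {X : ℝ} (hX : 0 < X) :
    ∫ t : ℝ, Kp X (((2:ℝ):ℂ) + t * I) = ((2 * Real.pi * max (X - 1) 0 : ℝ) : ℂ) := by
  set φ : ℝ → ℂ := fun y => indicator (Ioc 0 1) (fun _ => 1 : ℝ → ℂ) y -
    indicator (Ioc 0 1) (fun t => (t:ℂ) ^ (1:ℂ) : ℝ → ℂ) y with hφ
  have hm : ∀ s : ℂ, 1 < s.re → HasMellin φ s (1 / (s * (s + 1))) := by
    intro s hs
    have a := hasMellin_one_Ioc (s := s) (by linarith)
    have b := hasMellin_cpow_Ioc 1 (s := s) (by simp; linarith)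
    have := hasMellin_sub a.1 b.1
    rw [a.2, b.2] at this
    obtain ⟨h0, h1, _⟩ := s_ne hs
    have e : 1 / s - 1 / (s + 1) = 1 / (s * (s + 1)) := by field_simp; ring
    rwa [e] at this
  have hval : ∀ y : ℝ, 0 < y → φ y = ((max (1 - y) 0 : ℝ) : ℂ) := by
    intro y hy
    simp only [hφ, indicator, mem_Ioc, cpow_one]
    by_cases h : y ≤ 1
    · simp [hy, h]
    · have : max (1 - y) 0 = 0 := max_eq_right (by linarith)
      rw [this]; simp [h]
  have hcont : ContinuousAt φ (X⁻¹) := by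
    have : ContinuousAt (fun y : ℝ => ((max (1 - y) 0 : ℝ) : ℂ)) (X⁻¹) := by fun_prop
    refine this.congr ?_
    filter_upwards [lt_mem_nhds (inv_pos.2 hX)] with y hy
    exact (hval y hy).symm
  have hline : ∀ t : ℝ, mellin φ (((2:ℝ):ℂ) + t * I) = 1 / ((((2:ℝ):ℂ) + t * I) * ((((2:ℝ):ℂ) + t * I) + 1)) :=
    fun t => (hm _ (by simp)).2
  have hvi : VerticalIntegrable (mellin φ) 2 := by
    unfold VerticalIntegrable
    simp only [hline]
    have := Kp_line_integrable (X := 1) one_pos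
    simpa [Kp] using this
  have hinv := mellinInv_mellin_eq 2 φ (inv_pos.2 hX) (hm _ (by simp)).1 hvi hcont
  rw [mellinInv, hval _ (inv_pos.2 hX)] at hinv
  simp only [hline, smul_eq_mul] at hinv
  simp only [Kp_eq hX]
  rw [MeasureTheory.integral_const_mul]
  have hpi := Real.pi_pos
  have e2 : max (X - 1) 0 = X * max (1 - X⁻¹) 0 := by
    rw [mul_max_of_nonneg _ _ hX.le, mul_sub, mul_one, mul_inv_cancel₀ hX.ne', mul_zero]
  rw [e2]
  have hpi' : (Real.pi : ℂ) ≠ 0 := by exact_mod_cast hpi.ne'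
  rw [real_smul] at hinv
  have : ∀ A B : ℂ, ((1 / (2 * Real.pi) : ℝ) : ℂ) * A = B → A = 2 * Real.pi * B := by
    intro A B h
    rw [← h]; push_cast; field_simp
  rw [this _ _ hinv]
  push_cast; ring

lemma Kp1_line_integrable {X : ℝ} (hX : 0 < X) :
    MeasureTheory.Integrable (fun t : ℝ => Kp X (((2:ℝ):ℂ) + t * I) / ((((2:ℝ):ℂ) + t * I) - 1)) := by
  refine line_integrable (H := fun s => Kp X s / (s - 1)) (a := 2) (r := 2)
    (C := 4 / 1 * X ^ ((2:ℝ) + 1)) (by norm_num)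
    (fun s hs => (Kp_diff hX (by linarith)).div (by fun_prop) (s_ne (by linarith)).2.2.1) (fun s hs => ?_)
  have := Kp_bound hX one_pos le_rfl (s := s) (by linarith)
  rw [hs] at this
  rw [norm_div]
  have h1 : 1 ≤ ‖s - 1‖ := by
    have := re_le_norm (s - 1)
    simp [hs] at this; linarith
  exact (div_le_self (norm_nonneg _) h1).trans this

lemma perronB {X : ℝ} (hX : 1 ≤ X) :
    ∫ t : ℝ, Kp X (((2:ℝ):ℂ) + t * I) / ((((2:ℝ):ℂ) + t * I) - 1) =
      ((Real.pi * (X - 1)^2 : ℝ) : ℂ) := by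
  have hX0 : 0 < X := by linarith
  set φ : ℝ → ℂ := fun y => ((1/2 : ℂ) • indicator (Ioc 0 1) (fun t => (t:ℂ) ^ (-1:ℂ) : ℝ → ℂ) y -
    indicator (Ioc 0 1) (fun _ => 1 : ℝ → ℂ) y) +
    (1/2 : ℂ) • indicator (Ioc 0 1) (fun t => (t:ℂ) ^ (1:ℂ) : ℝ → ℂ) y with hφ
  have hm : ∀ s : ℂ, 1 < s.re → HasMellin φ s (1 / (s * (s + 1)) / (s - 1)) := by
    intro s hs
    have a := hasMellin_one_Ioc (s := s) (by linarith)
    have b0 := hasMellin_cpow_Ioc 1 (s := s) (by simp; linarith)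
    have c0 := hasMellin_cpow_Ioc (-1) (s := s) (by simp; linarith)
    have b := hasMellin_const_smul b0.1 (1/2 : ℂ)
    have c := hasMellin_const_smul c0.1 (1/2 : ℂ)
    have d := hasMellin_sub c.1 a.1
    have := hasMellin_add d.1 b.1
    rw [d.2, b.2, c.2, a.2, b0.2, c0.2] at this
    obtain ⟨h0, h1, h2, h3⟩ := s_ne hs
    have e : (1/2 : ℂ) • (1 / (s + -1)) - 1 / s + (1/2 : ℂ) • (1 / (s + 1)) = 1 / (s * (s + 1)) / (s - 1) := by
      rw [← sub_eq_add_neg, smul_eq_mul, smul_eq_mul]; field_simp; ring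
    rwa [e] at this
  have hval : ∀ y : ℝ, 0 < y → φ y = (((max (1 - y) 0)^2 / (2 * y) : ℝ) : ℂ) := by
    intro y hy
    have hy' : (y : ℂ) ≠ 0 := by exact_mod_cast hy.ne'
    simp only [hφ, indicator, mem_Ioc, cpow_one, cpow_neg_one]
    by_cases h : y ≤ 1
    · have : max (1 - y) 0 = 1 - y := max_eq_left (by linarith)
      rw [this]
      simp [hy, h]; field_simp; ring
    · have : max (1 - y) 0 = 0 := max_eq_right (by linarith)
      rw [this]
      simp [h]
  have hcont : ContinuousAt φ (X⁻¹) := by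
    have : ContinuousAt (fun y : ℝ => (((max (1 - y) 0)^2 / (2 * y) : ℝ) : ℂ)) (X⁻¹) := by
      apply continuous_ofReal.continuousAt.comp
      apply ContinuousAt.div (by fun_prop) (by fun_prop)
      positivity
    refine this.congr ?_
    filter_upwards [lt_mem_nhds (inv_pos.2 hX0)] with y hy
    exact (hval y hy).symm
  have hline : ∀ t : ℝ, mellin φ (((2:ℝ):ℂ) + t * I) =
      1 / ((((2:ℝ):ℂ) + t * I) * ((((2:ℝ):ℂ) + t * I) + 1)) / ((((2:ℝ):ℂ) + t * I) - 1) :=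
    fun t => (hm _ (by simp)).2
  have hvi : VerticalIntegrable (mellin φ) 2 := by
    unfold VerticalIntegrable
    simp only [hline]
    have := Kp1_line_integrable (X := 1) one_pos
    simpa [Kp] using this
  have hinv := mellinInv_mellin_eq 2 φ (inv_pos.2 hX0) (hm _ (by simp)).1 hvi hcont
  rw [mellinInv, hval _ (inv_pos.2 hX0)] at hinv
  simp only [hline, smul_eq_mul] at hinv
  simp only [Kp_eq hX0]
  simp only [mul_div_assoc]
  rw [MeasureTheory.integral_const_mul]
  have hpi := Real.pi_pos
  have e2 : max (1 - X⁻¹) 0 = 1 - X⁻¹ := max_eq_left (by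
    have := inv_le_one_of_one_le₀ hX
    linarith)
  rw [e2] at hinv
  have hpi' : (Real.pi : ℂ) ≠ 0 := by exact_mod_cast hpi.ne'
  rw [real_smul] at hinv
  have : ∀ A B : ℂ, ((1 / (2 * Real.pi) : ℝ) : ℂ) * A = B → A = 2 * Real.pi * B := by
    intro A B h
    rw [← h]; push_cast; field_simp
  rw [this _ _ hinv]
  have hX' : (X : ℂ) ≠ 0 := by exact_mod_cast hX0.ne'
  push_cast
  field_simp

noncomputable def vM (n : ℕ) : ℂ := (ArithmeticFunction.vonMangoldt n : ℂ)

lemma term_Kp {X : ℝ} (hX : 0 < X) {n : ℕ} (hn : n ≠ 0) (s : ℂ) :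
    LSeries.term vM s n * Kp X s = vM n * n * Kp (X / n) s := by
  rw [LSeries.term_of_ne_zero hn]
  have hn0 : (0:ℝ) < n := by positivity
  have hn' : (n : ℂ) ≠ 0 := by exact_mod_cast hn
  unfold Kp
  have e : ((X / n : ℝ) : ℂ) ^ (s + 1) = (X : ℂ) ^ (s + 1) / (n : ℂ) ^ (s + 1) := by
    rw [← ofReal_natCast n, ofReal_div]
    exact div_cpow_ofReal_nonneg hX.le hn0.le _
  rw [e, cpow_add _ _ hn', cpow_one]
  have : (n : ℂ) ^ s ≠ 0 := by simp [cpow_eq_zero_iff, hn']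
  field_simp

lemma GKp_integrable {X : ℝ} (hX : 0 < X) : MeasureTheory.Integrable (fun t : ℝ =>
    Gz (((2:ℝ):ℂ) + t * I) * Kp X (((2:ℝ):ℂ) + t * I)) := by
  obtain ⟨C, hC, h⟩ := fz_logDeriv_bound
  have hmeas : Measurable Gz := (measurable_deriv fz).div fz_differentiable.continuous.measurable
  refine MeasureTheory.Integrable.bdd_mul (c := C) (Kp_line_integrable hX) ?_ ?_
  · exact (hmeas.comp (by fun_prop : Measurable fun t : ℝ => ((2:ℝ):ℂ) + t * I)).aestronglyMeasurable
  · filter_upwards with t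
    exact h _ (by simp; norm_num)

lemma perron {X : ℝ} (hX : 1 ≤ X) {N : ℕ} (hN : X ≤ N + 1) :
    ∫ t : ℝ, Gz (((2:ℝ):ℂ) + t * I) * Kp X (((2:ℝ):ℂ) + t * I) =
      ((Real.pi * (X - 1)^2 - 2 * Real.pi * ∑ n ∈ Finset.Ioc 0 N,
        ArithmeticFunction.vonMangoldt n * max (X - n) 0 : ℝ) : ℂ) := by
  have hX0 : 0 < X := by linarith
  set F : ℕ → ℝ → ℂ := fun n t => LSeries.term vM (((2:ℝ):ℂ) + t * I) n * Kp X (((2:ℝ):ℂ) + t * I) with hF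
  have hF0 : ∀ t, F 0 t = 0 := fun t => by simp [hF]
  have hFn : ∀ n : ℕ, n ≠ 0 → ∀ t, F n t = vM n * n * Kp (X / n) (((2:ℝ):ℂ) + t * I) :=
    fun n hn t => term_Kp hX0 hn _
  have hFint : ∀ n, MeasureTheory.Integrable (F n) := by
    intro n
    rcases eq_or_ne n 0 with rfl | hn
    · have : F 0 = fun _ => 0 := funext hF0
      rw [this]; exact MeasureTheory.integrable_zero _ _ _
    · have : F n = fun t : ℝ => vM n * n * Kp (X / n) (((2:ℝ):ℂ) + t * I) := funext (hFn n hn)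
      rw [this]
      exact (Kp_line_integrable (by positivity)).const_mul _
  have hsummable : LSeriesSummable vM 2 :=
    ArithmeticFunction.LSeriesSummable_vonMangoldt (by norm_num)
  have hFnorm : ∀ n t, ‖F n t‖ = ‖LSeries.term vM 2 n‖ * ‖Kp X (((2:ℝ):ℂ) + t * I)‖ := by
    intro n t
    simp only [hF, norm_mul]
    congr 1
    rw [LSeries.norm_term_eq, LSeries.norm_term_eq]
    simp
  have hFsum : Summable fun n => ∫ t, ‖F n t‖ := by
    simp only [hFnorm, MeasureTheory.integral_const_mul]
    exact hsummable.norm.mul_right _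
  have hs := (MeasureTheory.hasSum_integral_of_summable_integral_norm hFint hFsum).tsum_eq
  have hval : ∀ n : ℕ, ∫ t, F n t =
      ((2 * Real.pi * (ArithmeticFunction.vonMangoldt n * max (X - n) 0) : ℝ) : ℂ) := by
    intro n
    rcases eq_or_ne n 0 with rfl | hn
    · simp [hF0]
    · simp only [hFn n hn]
      have hn0 : (0:ℝ) < n := by positivity
      rw [MeasureTheory.integral_const_mul, perronA (by positivity)]
      have : max (X - n) 0 = n * max (X / n - 1) 0 := by
        rw [mul_max_of_nonneg _ _ hn0.le, mul_sub, mul_one, mul_zero, mul_div_cancel₀ _ hn0.ne']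
      rw [this, vM]; push_cast; ring
  simp only [hval] at hs
  rw [tsum_eq_sum (s := Finset.Ioc 0 N)] at hs
  swap
  · intro n hn
    simp only [Finset.mem_Ioc, not_and, not_le] at hn
    rcases Nat.eq_zero_or_pos n with rfl | hpos
    · simp
    · have h1 : (N : ℝ) + 1 ≤ n := by exact_mod_cast hn hpos
      have : max (X - n) 0 = 0 := max_eq_right (by linarith)
      simp [this]
  have hG : ∀ t : ℝ, Gz (((2:ℝ):ℂ) + t * I) * Kp X (((2:ℝ):ℂ) + t * I) =
      Kp X (((2:ℝ):ℂ) + t * I) / ((((2:ℝ):ℂ) + t * I) - 1) - ∑' n, F n t := by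
    intro t
    rw [Gz, fz_logDeriv (by simp), sub_mul]
    congr 1
    · ring
    · simp only [hF, tsum_mul_right]; rfl
  simp only [hG]
  have hLint : MeasureTheory.Integrable (fun t : ℝ => ∑' n, F n t) := by
    have := (Kp1_line_integrable hX0).sub (GKp_integrable hX0)
    refine this.congr ?_
    filter_upwards with t
    simp only [Pi.sub_apply]
    rw [hG t]; ring
  rw [MeasureTheory.integral_sub (Kp1_line_integrable hX0) hLint, perronB hX, ← hs]
  push_cast
  rw [Finset.mul_sum]

section
variable (RH : ∀ s : ℂ, riemannZeta s = 0 → 0 < s.re → s.re < 1 → s.re = 1 / 2)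
set_option linter.unusedSectionVars false
include RH

lemma smooth_bound : ∃ C : ℝ, 0 < C ∧ ∀ x : ℝ, Real.exp 10 ≤ x →
    Chebyshev.psi x ≤ x + C * Real.sqrt x * (Real.log x)^2 ∧
    x - C * Real.sqrt x * (Real.log x)^2 ≤ Chebyshev.psi (x + Real.sqrt x) := by
  obtain ⟨C, hC, h⟩ := main_int RH
  refine ⟨C + 1, by positivity, fun x hx => ?_⟩
  have hx1 : 1 < x := lt_of_lt_of_le (by rw [← Real.exp_zero]; exact Real.exp_lt_exp.2 (by norm_num)) hx
  have hx0 : 0 < x := by linarith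
  have hlog : 10 ≤ Real.log x := by rwa [Real.le_log_iff_exp_le hx0]
  have hsq : 1 ≤ Real.sqrt x := by rw [Real.one_le_sqrt]; exact hx1.le
  have hb := h x hx
  set N := ⌊x + Real.sqrt x⌋₊ with hN
  have hN1 : x + Real.sqrt x ≤ N + 1 := (Nat.lt_floor_add_one _).le
  have p1 := perron (X := x + Real.sqrt x) (by linarith) hN1
  have p2 := perron (X := x) hx1.le (N := N) (by linarith)
  have hI : ∫ t : ℝ, Gz (((2:ℝ):ℂ) + t * I) * Kx x (((2:ℝ):ℂ) + t * I) =
      ((∫ t : ℝ, Gz (((2:ℝ):ℂ) + t * I) * Kp (x + Real.sqrt x) (((2:ℝ):ℂ) + t * I)) -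
      ∫ t : ℝ, Gz (((2:ℝ):ℂ) + t * I) * Kp x (((2:ℝ):ℂ) + t * I)) / (Real.sqrt x : ℂ) := by
    rw [← MeasureTheory.integral_sub (GKp_integrable (by positivity)) (GKp_integrable hx0),
      ← MeasureTheory.integral_div]
    congr 1; ext t; unfold Kx; ring
  set W : ℕ → ℝ := fun n => max (x + Real.sqrt x - n) 0 - max (x - n) 0 with hW
  set A : ℝ := ∑ n ∈ Finset.Ioc 0 N, ArithmeticFunction.vonMangoldt n * W n with hA
  have hI2 : ∫ t : ℝ, Gz (((2:ℝ):ℂ) + t * I) * Kx x (((2:ℝ):ℂ) + t * I) =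
      ((2 * Real.pi * ((x - 1 + Real.sqrt x / 2) - A / Real.sqrt x) : ℝ) : ℂ) := by
    rw [hI, p1, p2, ← ofReal_sub, ← ofReal_div]
    congr 1
    have hAe : A = (∑ n ∈ Finset.Ioc 0 N, ArithmeticFunction.vonMangoldt n * max (x + Real.sqrt x - n) 0) -
        ∑ n ∈ Finset.Ioc 0 N, ArithmeticFunction.vonMangoldt n * max (x - n) 0 := by
      rw [hA, ← Finset.sum_sub_distrib]
      simp only [hW, mul_sub]
    rw [hAe]
    field_simp
    ring
  rw [hI2, norm_real, Real.norm_eq_abs, abs_mul, abs_of_pos (by positivity : 0 < 2 * Real.pi)] at hb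
  set D := |x - 1 + Real.sqrt x / 2 - A / Real.sqrt x| with hD
  have hD0 : 0 ≤ D := abs_nonneg _
  have hDb : D ≤ C * Real.sqrt x * (Real.log x)^2 := by
    refine le_trans ?_ hb
    nlinarith [Real.pi_gt_three]
  obtain ⟨hl, hu⟩ := abs_le.1 (le_of_eq hD.symm)
  have hsl : Real.sqrt x ≤ Real.sqrt x * (Real.log x)^2 := le_mul_of_one_le_right (by linarith) (by nlinarith)
  have hL0 : ∀ n : ℕ, 0 ≤ ArithmeticFunction.vonMangoldt n := fun n => ArithmeticFunction.vonMangoldt_nonneg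
  have hW0 : ∀ n, 0 ≤ W n := fun n => by
    simp only [hW, sub_nonneg]
    exact max_le_max (by linarith) le_rfl
  have hW1 : ∀ n, W n ≤ Real.sqrt x := fun n => by
    simp only [hW, sub_le_iff_le_add]
    refine max_le ?_ ?_
    · have := le_max_left (x - n) 0; linarith
    · have := le_max_right (x - n) 0; linarith
  have hpsi1 : Chebyshev.psi x ≤ A / Real.sqrt x := by
    rw [le_div_iff₀ (by linarith), Chebyshev.psi, Finset.sum_mul, hA]
    have hsub : Finset.Ioc 0 ⌊x⌋₊ ⊆ Finset.Ioc 0 N := by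
      apply Finset.Ioc_subset_Ioc_right
      exact Nat.floor_le_floor (by linarith)
    refine le_trans (Finset.sum_le_sum ?_) (Finset.sum_le_sum_of_subset_of_nonneg hsub
      (fun n _ _ => mul_nonneg (hL0 n) (hW0 n)))
    intro n hn
    have hnx : (n : ℝ) ≤ x := (Nat.le_floor_iff hx0.le).1 (Finset.mem_Ioc.1 hn).2
    apply mul_le_mul_of_nonneg_left _ (hL0 n)
    simp only [hW]
    rw [max_eq_left (by linarith), max_eq_left (by linarith)]
    linarith
  have hpsi2 : A / Real.sqrt x ≤ Chebyshev.psi (x + Real.sqrt x) := by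
    rw [div_le_iff₀ (by linarith), Chebyshev.psi, Finset.sum_mul, hA]
    exact Finset.sum_le_sum fun n _ => mul_le_mul_of_nonneg_left (hW1 n) (hL0 n)
  constructor <;> nlinarith

lemma psi_bound : ∃ C : ℝ, 0 < C ∧ ∀ x : ℝ, 2 ≤ x →
    |Chebyshev.psi x - x| ≤ C * Real.sqrt x * (Real.log x)^2 := by
  obtain ⟨C, hC, h⟩ := smooth_bound RH
  set x0 : ℝ := 2 * Real.exp 10 with hx0
  have hl2 : 0 < Real.log 2 := Real.log_pos (by norm_num)
  set C' : ℝ := (Chebyshev.psi x0 + x0) / (Real.log 2)^2 with hC'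
  have hC'0 : 0 ≤ C' := by
    have := Chebyshev.psi_nonneg x0
    positivity
  refine ⟨C' + (C + 1 / (Real.log 2)^2), by positivity, fun x hx => ?_⟩
  have hsq : 1 ≤ Real.sqrt x := by rw [Real.one_le_sqrt]; linarith
  have hlx : Real.log 2 ≤ Real.log x := Real.log_le_log (by norm_num) hx
  have hlx0 : 0 < Real.log x := by linarith
  have hlx2 : (Real.log 2)^2 ≤ (Real.log x)^2 := by gcongr
  have hpos : 0 < Real.sqrt x * (Real.log x)^2 := by positivity
  rw [mul_assoc]
  rcases le_total x x0 with hxx | hxx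
  · have h1 : |Chebyshev.psi x - x| ≤ Chebyshev.psi x0 + x0 := by
      have a := Chebyshev.psi_mono hxx
      have b := Chebyshev.psi_nonneg x
      rw [abs_le]; constructor <;> linarith
    have h2 : Chebyshev.psi x0 + x0 = C' * (Real.log 2)^2 := by rw [hC']; field_simp
    calc _ ≤ C' * (1 * (Real.log 2)^2) := by rw [one_mul, ← h2]; exact h1
      _ ≤ C' * (Real.sqrt x * (Real.log x)^2) := by gcongr
      _ ≤ _ := by
        gcongr
        have : 0 < C + 1 / (Real.log 2)^2 := by positivity
        linarith
  · have hexp : (11:ℝ) ≤ Real.exp 10 := by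
      have := Real.add_one_le_exp (10:ℝ); linarith
    have hup := (h x (by linarith)).1
    set y := x - Real.sqrt x with hy
    have hss : Real.sqrt x * Real.sqrt x = x := Real.mul_self_sqrt (by linarith)
    have hs2 : 2 ≤ Real.sqrt x := by
      rw [Real.le_sqrt (by norm_num) (by linarith)]; linarith
    have hyx : Real.exp 10 ≤ y := by nlinarith
    have hylex : y ≤ x := by linarith
    have hy0 : 0 < y := by linarith
    have hlow := (h y hyx).2
    have hm : Chebyshev.psi (y + Real.sqrt y) ≤ Chebyshev.psi x := by
      apply Chebyshev.psi_mono
      have := Real.sqrt_le_sqrt hylex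
      linarith
    have hmm : C * Real.sqrt y * (Real.log y)^2 ≤ C * Real.sqrt x * (Real.log x)^2 := by
      have : 0 ≤ Real.log y := Real.log_nonneg (by linarith)
      gcongr
    have h3 : Real.sqrt x ≤ 1 / (Real.log 2)^2 * (Real.sqrt x * (Real.log x)^2) := by
      rw [div_mul_eq_mul_div, one_mul, le_div_iff₀ (by positivity)]
      gcongr
    have h4 := mul_nonneg hC'0 hpos.le
    rw [abs_le]; constructor <;> nlinarith

lemma theta_bound : ∃ C : ℝ, 0 < C ∧ ∀ x : ℝ, 2 ≤ x →
    |Chebyshev.theta x - x| ≤ C * Real.sqrt x * (Real.log x)^2 := by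
  obtain ⟨C, hC, h⟩ := psi_bound RH
  have hl2 : 0 < Real.log 2 := Real.log_pos (by norm_num)
  refine ⟨C + 2 / Real.log 2, by positivity, fun x hx => ?_⟩
  have hlx : Real.log 2 ≤ Real.log x := Real.log_le_log (by norm_num) hx
  have h1 := h x hx
  have h2 := Chebyshev.abs_psi_sub_theta_le_sqrt_mul_log (x := x) (by linarith)
  have h3 : 2 * Real.sqrt x * Real.log x ≤ 2 / Real.log 2 * Real.sqrt x * (Real.log x)^2 := by
    have : 1 ≤ Real.log x / Real.log 2 := by rwa [one_le_div hl2]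
    have hlx0 : 0 < Real.log x := by linarith
    have h0 : 0 ≤ 2 * Real.sqrt x * Real.log x := by positivity
    calc 2 * Real.sqrt x * Real.log x ≤ 2 * Real.sqrt x * Real.log x * (Real.log x / Real.log 2) :=
          le_mul_of_one_le_right h0 this
      _ = _ := by ring
  have h4 : Chebyshev.theta x - x = (Chebyshev.psi x - x) - (Chebyshev.psi x - Chebyshev.theta x) := by ring
  rw [h4]
  refine (abs_sub _ _).trans ?_
  nlinarith

end

lemma li_parts {x : ℝ} (hx : 2 ≤ x) : ∫ t in (2:ℝ)..x, 1 / Real.log t =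
    x / Real.log x - 2 / Real.log 2 + ∫ t in (2:ℝ)..x, 1 / (Real.log t)^2 := by
  have hl : ∀ t ∈ uIcc 2 x, Real.log t ≠ 0 := by
    intro t ht
    rw [uIcc_of_le hx] at ht
    exact (Real.log_pos (by linarith [ht.1])).ne'
  have ht0 : ∀ t ∈ uIcc 2 x, t ≠ 0 := by
    intro t ht
    rw [uIcc_of_le hx] at ht
    linarith [ht.1]
  have c1 : ContinuousOn (fun t : ℝ => 1 / Real.log t) (uIcc 2 x) :=
    continuousOn_const.div (Real.continuousOn_log.mono (fun t ht => ht0 t ht)) hl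
  have c2 : ContinuousOn (fun t : ℝ => 1 / (Real.log t)^2) (uIcc 2 x) :=
    continuousOn_const.div ((Real.continuousOn_log.mono (fun t ht => ht0 t ht)).pow 2)
      (fun t ht => pow_ne_zero 2 (hl t ht))
  have i1 := c1.intervalIntegrable (μ := MeasureTheory.volume)
  have i2 := c2.intervalIntegrable (μ := MeasureTheory.volume)
  have := intervalIntegral.integral_eq_sub_of_hasDerivAt (a := 2) (b := x)
    (f := fun t => t / Real.log t) (f' := fun t => 1 / Real.log t - 1 / (Real.log t)^2) (by
      intro t ht
      have h1 := hl t ht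
      have h0 := ht0 t ht
      have := (hasDerivAt_id t).div (Real.hasDerivAt_log h0) h1
      refine this.congr_deriv ?_
      simp only [id]
      field_simp) (i1.sub i2)
  rw [intervalIntegral.integral_sub i1 i2] at this
  linarith

lemma pi_bound (RH : ∀ s : ℂ, riemannZeta s = 0 → 0 < s.re → s.re < 1 → s.re = 1 / 2) :
    ∃ C : ℝ, 0 < C ∧ ∀ x : ℝ, 2 ≤ x →
      |(Nat.primeCounting ⌊x⌋₊ : ℝ) - ∫ t in (2 : ℝ)..x, 1 / Real.log t| ≤
        C * Real.sqrt x * Real.log x := by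
  obtain ⟨C, hC, h⟩ := theta_bound RH
  have hl2 : 0 < Real.log 2 := Real.log_pos (by norm_num)
  refine ⟨C + 2 * C / Real.log 2 + 2 / (Real.log 2)^2, by positivity, fun x hx => ?_⟩
  have hlx : Real.log 2 ≤ Real.log x := Real.log_le_log (by norm_num) hx
  have hlx0 : 0 < Real.log x := by linarith
  have hsq : 1 ≤ Real.sqrt x := by rw [Real.one_le_sqrt]; linarith
  have hl : ∀ t ∈ Icc 2 x, 0 < Real.log t := fun t ht => Real.log_pos (by linarith [ht.1])
  have i1 : IntervalIntegrable (fun t => Chebyshev.theta t / (t * Real.log t ^ 2)) MeasureTheory.volume 2 x := by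
    rw [intervalIntegrable_iff_integrableOn_Icc_of_le hx]
    exact Chebyshev.integrableOn_theta_div_id_mul_log_sq x
  have i2 : IntervalIntegrable (fun t : ℝ => 1 / (Real.log t)^2) MeasureTheory.volume 2 x := by
    apply ContinuousOn.intervalIntegrable
    rw [uIcc_of_le hx]
    refine continuousOn_const.div ((Real.continuousOn_log.mono ?_).pow 2)
      (fun t ht => pow_ne_zero 2 (hl t ht).ne')
    intro t ht
    have : t ≠ 0 := by linarith [ht.1]
    exact this
  have e : (Nat.primeCounting ⌊x⌋₊ : ℝ) - ∫ t in (2 : ℝ)..x, 1 / Real.log t =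
      (Chebyshev.theta x - x) / Real.log x + 2 / Real.log 2 +
      ∫ t in (2:ℝ)..x, (Chebyshev.theta t / (t * Real.log t ^ 2) - 1 / (Real.log t)^2) := by
    rw [Chebyshev.primeCounting_eq_theta_div_log_add_integral hx, li_parts hx,
      intervalIntegral.integral_sub i1 i2]
    ring
  have hI : ‖∫ t in (2:ℝ)..x, (Chebyshev.theta t / (t * Real.log t ^ 2) - 1 / (Real.log t)^2)‖ ≤
      ∫ t in (2:ℝ)..x, C * t ^ (-(1/2) : ℝ) := by
    apply intervalIntegral.norm_integral_le_of_norm_le hx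
    · refine MeasureTheory.ae_of_all _ ?_
      intro t ht
      have ht2 : 2 ≤ t := ht.1.le
      have ht0 : 0 < t := by linarith
      have hlt := hl t ⟨ht2, ht.2⟩
      have hb := h t ht2
      have : Chebyshev.theta t / (t * Real.log t ^ 2) - 1 / (Real.log t)^2 =
          (Chebyshev.theta t - t) / (t * Real.log t ^ 2) := by field_simp
      rw [this, Real.norm_eq_abs, abs_div, abs_of_pos (by positivity : 0 < t * Real.log t ^ 2),
        div_le_iff₀ (by positivity)]
      refine hb.trans (le_of_eq ?_)
      have h1 : t ^ (-(1/2) : ℝ) * t = Real.sqrt t := by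
        rw [Real.sqrt_eq_rpow]
        nth_rewrite 2 [← Real.rpow_one t]
        rw [← Real.rpow_add ht0]; norm_num
      rw [← h1]; ring
    · apply IntervalIntegrable.const_mul
      exact intervalIntegral.intervalIntegrable_rpow' (by norm_num)
  have hI2 : ∫ t in (2:ℝ)..x, C * t ^ (-(1/2) : ℝ) ≤ 2 * C * Real.sqrt x := by
    rw [intervalIntegral.integral_const_mul, integral_rpow (Or.inl (by norm_num))]
    have h1 : (-(1/2) + 1 : ℝ) = 1/2 := by norm_num
    rw [h1, ← Real.sqrt_eq_rpow, ← Real.sqrt_eq_rpow]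
    have := Real.sqrt_nonneg 2
    nlinarith
  rw [Real.norm_eq_abs] at hI
  rw [e]
  have h1 : |(Chebyshev.theta x - x) / Real.log x| ≤ C * Real.sqrt x * Real.log x := by
    rw [abs_div, abs_of_pos hlx0, div_le_iff₀ hlx0]
    refine (h x hx).trans (le_of_eq (by ring))
  have h2 : |2 / Real.log 2| ≤ 2 / (Real.log 2)^2 * Real.sqrt x * Real.log x := by
    rw [abs_of_pos (by positivity)]
    calc 2 / Real.log 2 = 2 / (Real.log 2)^2 * 1 * Real.log 2 := by field_simp
      _ ≤ _ := by gcongr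
  have h3 : 2 * C * Real.sqrt x ≤ 2 * C / Real.log 2 * Real.sqrt x * Real.log x := by
    calc 2 * C * Real.sqrt x = 2 * C / Real.log 2 * Real.sqrt x * Real.log 2 := by field_simp
      _ ≤ _ := by gcongr
  refine (abs_add_le _ _).trans ?_
  have h4 := abs_add_le ((Chebyshev.theta x - x) / Real.log x) (2 / Real.log 2)
  have h5 := (hI.trans hI2).trans h3
  have : (C + 2 * C / Real.log 2 + 2 / (Real.log 2)^2) * Real.sqrt x * Real.log x =
    C * Real.sqrt x * Real.log x + 2 * C / Real.log 2 * Real.sqrt x * Real.log x +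
    2 / (Real.log 2)^2 * Real.sqrt x * Real.log x := by ring
  rw [this]
  linarith

end VonKochAux

/-- Von Koch (1901): if the Riemann hypothesis holds, then
`π(x) = Li(x) + O(√x log x)`, i.e. there is `C > 0` such that
`|π(x) - ∫_2^x dt/log t| ≤ C √x log x` for all `x ≥ 2`. -/
theorem vonKoch_of_RH
    (RH : ∀ s : ℂ, riemannZeta s = 0 → 0 < s.re → s.re < 1 → s.re = 1 / 2) :
    ∃ C : ℝ, 0 < C ∧ ∀ x : ℝ, 2 ≤ x →
      |(primePi x : ℝ) - ∫ t in (2 : ℝ)..x, 1 / Real.log t| ≤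
        C * Real.sqrt x * Real.log x := by
  exact pi_bound RH
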